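/- Assume the Riemann Hypothesis. Let Z = (S_Z, m_Z) and P = (S_P, m_P) be disjoint multisets contained in the strip 1/2 < Re s < 1 such that the set S_Z ∪ S_P has no accumulation points in ℂ off the line Re s = 1/2. Assume moreover that Z and P are symmetric with respect to the real axis, i.e. s ∈ S_Z iff conj(s) ∈ S_Z with m_Z(conj(s)) = m_Z(s), and likewise for P. Then there exists a completely multiplicative function χ : ℕ → {1, −1} and a meromorphic function F on the half-plane Re s > 1/2 such that F(s) = ζ_χ(s) = ∑_{n=1}^∞ χ(n) n^{-s} for Re s > 1, the zeros of F in the half-plane Re s > 1/2 are exactly the points of S_Z with the zero at s having multiplicity m_Z(s), and the poles of F are exactly the points of S_P with the pole at s having order m_P(s). -/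

import Mathlib

/-!
For `χ` completely multiplicative with signs `εₚ` at the primes, `ζ_χ(s)` equals
`exp (∑ₚ εₚ p^{-s})` times a zero-free function holomorphic on `Re s > 1/2`
(`helsonZeta_eq_exp`, `powerSum_differentiableOn`). So only the continuation of
`exp (∑ₚ εₚ p^{-s})` matters.

*Rounding.* If `aₚ ∈ [-1, 1]` are real, signs chosen greedily keep the partial sums of `εₚ - aₚ`
bounded, and then `∑ₚ (εₚ - aₚ) p^{-s}` continues analytically to `Re s > 0` by partial summation
(`exists_signs`). Hence it suffices to realise the zeros by `G_Z = exp (∑ₚ aₚ p^{-s})` with real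
`|aₚ| ≤ 1/2`, the poles by the reciprocal of a similar `G_P`, and to round the difference of the
two coefficient sequences.

*One zero.* Under the Riemann Hypothesis `exp (-∑ₚ p^{-s}) = (s - 1) g(s)` with `g` zero-free on
`Re s > 1/2` (`exists_inverse_zeta`). For `1/2 < Re ρ < 1` the coefficients `-p^{ρ-1}` thus give a
function with a single simple zero at `ρ`. Dropping finitely many primes makes the coefficients
small. On a box lying to the right of `ρ` the remaining tail is small too. On a box lying below `ρ`
a branch of the logarithm of the tail exists and can be approximated uniformly by a Dirichlet
polynomial over the primes with small coefficients (`approx_tail`, a Hahn–Banach argument);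
subtracting it makes the factor close to `1` (`exists_factor`).

*All zeros.* As the zeros accumulate only at `Re s = 1/2` and at infinity, those with `Im ρ ≥ 0`
can be given boxes exhausting the half-plane, and the infinite product of the factors converges
locally uniformly (`exists_upper_product`). Multiplying the product over `Im ρ > 0` by its
reflection `s ↦ conj (G (conj s))` and by the product over the real zeros yields real coefficients
(`exists_symm_product`).
-/

open Complex Filter Set

/-- A completely multiplicative function: `χ 1 = 1` and `χ (m*n) = χ m * χ n`. -/
def CompletelyMultiplicative (χ : ℕ → ℂ) : Prop :=
  χ 1 = 1 ∧ ∀ m n : ℕ, χ (m * n) = χ m * χ n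

/-- The Helson zeta function `ζ_χ(s) = ∑_{n ≥ 1} χ(n) n^{-s}`. -/
noncomputable def helsonZeta (χ : ℕ → ℂ) (s : ℂ) : ℂ :=
  ∑' n : ℕ, χ (n + 1) * ((n : ℂ) + 1) ^ (-s)

/-- `F` has a zero of multiplicity `k` at `s`. -/
def ZeroOfOrder (F : ℂ → ℂ) (s : ℂ) (k : ℕ) : Prop :=
  ∃ g : ℂ → ℂ, AnalyticAt ℂ g s ∧ g s ≠ 0 ∧ ∀ᶠ z in nhds s, F z = (z - s) ^ k * g z

/-- `F` has a pole of order `k` at `s`. -/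
def PoleOfOrder (F : ℂ → ℂ) (s : ℂ) (k : ℕ) : Prop :=
  ∃ g : ℂ → ℂ, AnalyticAt ℂ g s ∧ g s ≠ 0 ∧
    ∀ᶠ z in nhdsWithin s {s}ᶜ, F z = (z - s) ^ (-(k : ℤ)) * g z

namespace HelsonPrescribed

/-- The open half-plane `Re s > 1/2`. -/
def HP : Set ℂ := {s | 1 / 2 < s.re}

lemma isOpen_HP : IsOpen HP := isOpen_lt continuous_const continuous_re

/-- The Dirichlet series `∑ₚ aₚ p^{-s}` over the primes. -/
noncomputable def primeSum (a : Nat.Primes → ℂ) (s : ℂ) : ℂ := ∑' p : Nat.Primes, a p * (p : ℂ) ^ (-s)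

/-! ### Euler products and the logarithm of a Dirichlet series -/

lemma norm_prime_cpow (p : Nat.Primes) (s : ℂ) : ‖(p : ℂ) ^ (-s)‖ = (p : ℝ) ^ (-s.re) := by
  rw [Complex.norm_natCast_cpow_of_pos p.prop.pos]; simp

lemma prime_rpow_le {x y : ℝ} (h : x ≤ y) (p : Nat.Primes) : (p : ℝ) ^ (-y) ≤ (p : ℝ) ^ (-x) :=
  Real.rpow_le_rpow_of_exponent_le (by exact_mod_cast p.prop.one_le) (by linarith)

lemma summable_primes_rpow {x : ℝ} (hx : 1 < x) : Summable fun p : Nat.Primes => (p : ℝ) ^ (-x) :=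
  Nat.Primes.summable_rpow.2 (by linarith)

lemma primeSum_summable_norm {a : Nat.Primes → ℂ} {C : ℝ} (ha : ∀ p : Nat.Primes, ‖a p‖ ≤ C) {s : ℂ}
    (hs : 1 < s.re) : Summable fun p : Nat.Primes => ‖a p * (p : ℂ) ^ (-s)‖ := by
  refine Summable.of_nonneg_of_le (fun _ => norm_nonneg _) (fun p => ?_)
    ((summable_primes_rpow hs).mul_left C)
  rw [norm_mul, norm_prime_cpow]
  exact mul_le_mul_of_nonneg_right (ha p) (by positivity)

lemma primeSum_summable {a : Nat.Primes → ℂ} {C : ℝ} (ha : ∀ p : Nat.Primes, ‖a p‖ ≤ C) {s : ℂ}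
    (hs : 1 < s.re) : Summable fun p : Nat.Primes => a p * (p : ℂ) ^ (-s) :=
  (primeSum_summable_norm ha hs).of_norm

lemma differentiable_prime_cpow (p : Nat.Primes) : Differentiable ℂ fun s : ℂ => (p : ℂ) ^ (-s) := by
  intro s
  exact (differentiableAt_id.neg).const_cpow (Or.inl (by exact_mod_cast p.prop.ne_zero))

lemma isOpen_re_gt (x : ℝ) : IsOpen {s : ℂ | x < s.re} := isOpen_lt continuous_const continuous_re

lemma primeSum_differentiableOn {a : Nat.Primes → ℂ} {C : ℝ} (ha : ∀ p : Nat.Primes, ‖a p‖ ≤ C) :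
    DifferentiableOn ℂ (primeSum a) {s | 1 < s.re} := by
  intro s hs
  obtain ⟨x, hx1, hx2⟩ := exists_between (show 1 < s.re from hs)
  have := differentiableOn_tsum_of_summable_norm (F := fun (p : Nat.Primes) s => a p * (p : ℂ) ^ (-s))
    ((summable_primes_rpow hx1).mul_left C)
    (fun p => ((differentiable_prime_cpow p).const_mul (a p)).differentiableOn)
    (isOpen_re_gt x) (fun p w hw => by
      rw [norm_mul, norm_prime_cpow]
      exact mul_le_mul (ha p) (prime_rpow_le (le_of_lt hw) p) (by positivity)
        ((norm_nonneg _).trans (ha p)))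
  exact (this.differentiableAt ((isOpen_re_gt x).mem_nhds hx2)).differentiableWithinAt

/-- The contribution of the prime powers `p^k`, `k ≥ 2`, to the logarithm of the Euler product:
`∑ₚ (-log (1 - χ(p) p^{-s}) - χ(p) p^{-s})`. -/
noncomputable def powerSum (χ : ℕ → ℂ) (s : ℂ) : ℂ :=
  ∑' p : Nat.Primes, (-log (1 - χ p * (p : ℂ) ^ (-s)) - χ p * (p : ℂ) ^ (-s))

lemma norm_term_le {χ : ℕ → ℂ} (hχ : ∀ p : Nat.Primes, ‖χ p‖ ≤ 1) {x : ℝ} (hx : 1 / 2 ≤ x)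
    (p : Nat.Primes) {s : ℂ} (hs : x ≤ s.re) :
    ‖χ p * (p : ℂ) ^ (-s)‖ ≤ (p : ℝ) ^ (-x) ∧ ‖χ p * (p : ℂ) ^ (-s)‖ ≤ (2 : ℝ) ^ (-(1 / 2) : ℝ) := by
  have h1 : ‖χ p * (p : ℂ) ^ (-s)‖ ≤ (p : ℝ) ^ (-x) := by
    rw [norm_mul, norm_prime_cpow]
    calc _ ≤ 1 * (p : ℝ) ^ (-x) :=
          mul_le_mul (hχ p) (prime_rpow_le hs p) (by positivity) zero_le_one
      _ = _ := one_mul _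
  refine ⟨h1, h1.trans ?_⟩
  have h2 : (2 : ℝ) ≤ p := by exact_mod_cast p.prop.two_le
  calc (p : ℝ) ^ (-x) ≤ (2 : ℝ) ^ (-x) :=
        Real.rpow_le_rpow_of_nonpos (by norm_num) h2 (by linarith)
    _ ≤ _ := Real.rpow_le_rpow_of_exponent_le (by norm_num) (by linarith)

lemma two_rpow_lt_one : (2 : ℝ) ^ (-(1 / 2) : ℝ) < 1 :=
  Real.rpow_lt_one_of_one_lt_of_neg (by norm_num) (by norm_num)

lemma powerSum_term_bound {χ : ℕ → ℂ} (hχ : ∀ p : Nat.Primes, ‖χ p‖ ≤ 1) {x : ℝ} (hx : 1 / 2 ≤ x)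
    (p : Nat.Primes) {s : ℂ} (hs : x ≤ s.re) :
    ‖-log (1 - χ p * (p : ℂ) ^ (-s)) - χ p * (p : ℂ) ^ (-s)‖ ≤
      (1 - (2 : ℝ) ^ (-(1 / 2) : ℝ))⁻¹ / 2 * (p : ℝ) ^ (-(2 * x)) := by
  obtain ⟨h1, h2⟩ := norm_term_le hχ hx p hs
  set z := χ p * (p : ℂ) ^ (-s)
  have hz : ‖-z‖ < 1 := by rw [norm_neg]; exact h2.trans_lt two_rpow_lt_one
  have h3 := norm_log_one_add_sub_self_le hz
  have e : -log (1 - z) - z = -(log (1 + -z) - -z) := by rw [← sub_eq_add_neg]; ring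
  rw [e, norm_neg]
  refine h3.trans ?_
  rw [norm_neg]
  have h4 : ‖z‖ ^ 2 ≤ (p : ℝ) ^ (-(2 * x)) := by
    have : (p : ℝ) ^ (-(2 * x)) = ((p : ℝ) ^ (-x)) ^ 2 := by
      rw [← Real.rpow_natCast, ← Real.rpow_mul (by positivity)]; congr 1; push_cast; ring
    rw [this]; gcongr
  have h5 : (1 - ‖z‖)⁻¹ ≤ (1 - (2 : ℝ) ^ (-(1 / 2) : ℝ))⁻¹ :=
    inv_anti₀ (by linarith [two_rpow_lt_one]) (by linarith)
  have h6 : 0 ≤ (1 - (2 : ℝ) ^ (-(1 / 2) : ℝ))⁻¹ := inv_nonneg.2 (by linarith [two_rpow_lt_one])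
  calc ‖z‖ ^ 2 * (1 - ‖z‖)⁻¹ / 2
      ≤ (p : ℝ) ^ (-(2 * x)) * (1 - (2 : ℝ) ^ (-(1 / 2) : ℝ))⁻¹ / 2 := by
        gcongr
        rw [norm_neg] at hz
        exact inv_nonneg.2 (by linarith)
    _ = _ := by ring

lemma powerSum_summable {χ : ℕ → ℂ} (hχ : ∀ p : Nat.Primes, ‖χ p‖ ≤ 1) {s : ℂ} (hs : s ∈ HP) :
    Summable fun p : Nat.Primes => (-log (1 - χ p * (p : ℂ) ^ (-s)) - χ p * (p : ℂ) ^ (-s)) := by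
  have hs' : 1 / 2 < s.re := hs
  exact Summable.of_norm_bounded ((summable_primes_rpow (by linarith)).mul_left _)
    (fun p => powerSum_term_bound hχ hs'.le p le_rfl)

lemma powerSum_differentiableOn {χ : ℕ → ℂ} (hχ : ∀ p : Nat.Primes, ‖χ p‖ ≤ 1) :
    DifferentiableOn ℂ (powerSum χ) HP := by
  intro s hs
  obtain ⟨x, hx1, hx2⟩ := exists_between (show 1 / 2 < s.re from hs)
  have := differentiableOn_tsum_of_summable_norm
    (F := fun (p : Nat.Primes) s => (-log (1 - χ p * (p : ℂ) ^ (-s)) - χ p * (p : ℂ) ^ (-s)))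
    ((summable_primes_rpow (x := 2 * x) (by linarith)).mul_left _)
    (fun p w hw => by
      have hd : DifferentiableAt ℂ (fun s : ℂ => χ p * (p : ℂ) ^ (-s)) w :=
        (differentiable_prime_cpow p w).const_mul _
      have hn := (norm_term_le hχ hx1.le p (le_of_lt hw)).2.trans_lt two_rpow_lt_one
      refine DifferentiableAt.differentiableWithinAt ?_
      refine ((DifferentiableAt.clog (hd.const_sub 1) ?_).neg).sub hd
      have := mem_slitPlane_of_norm_lt_one (z := -(χ p * (p : ℂ) ^ (-w))) (by rwa [norm_neg])
      rwa [← sub_eq_add_neg] at this)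
    (isOpen_re_gt x) (fun p w hw => powerSum_term_bound hχ hx1.le p (le_of_lt hw))
  exact (this.differentiableAt ((isOpen_re_gt x).mem_nhds hx2)).differentiableWithinAt

/-- The completely multiplicative function with prescribed values `ε p` at the primes, and value
`0` at `0`. -/
noncomputable def multExt (ε : ℕ → ℂ) : ℕ →*₀ ℂ where
  toFun n := if n = 0 then 0 else n.factorization.prod fun p k => ε p ^ k
  map_zero' := by simp
  map_one' := by simp
  map_mul' m n := by
    by_cases hm : m = 0
    · simp [hm]
    by_cases hn : n = 0
    · simp [hn]
    simp only [mul_eq_zero, hm, hn, or_self, if_false]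
    rw [Nat.factorization_mul hm hn, Finsupp.prod_add_index']
    · simp
    · intro a b₁ b₂; exact pow_add _ _ _

lemma multExt_prime (ε : ℕ → ℂ) (p : Nat.Primes) : multExt ε p = ε p := by
  change (if (p : ℕ) = 0 then 0 else (p : ℕ).factorization.prod fun p k => ε p ^ k) = ε p
  rw [if_neg p.prop.ne_zero, p.prop.factorization, Finsupp.prod_single_index] <;> simp

lemma multExt_ne_zero (ε : ℕ → ℂ) {n : ℕ} (hn : n ≠ 0) :
    multExt ε n = n.factorization.prod fun p k => ε p ^ k := if_neg hn

lemma multExt_norm_le {ε : ℕ → ℂ} (hε : ∀ p, ‖ε p‖ ≤ 1) (n : ℕ) : ‖multExt ε n‖ ≤ 1 := by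
  rcases eq_or_ne n 0 with rfl | hn
  · simp
  · rw [multExt_ne_zero ε hn, Finsupp.prod, norm_prod]
    refine Finset.prod_le_one (fun _ _ => norm_nonneg _) (fun p _ => ?_)
    rw [norm_pow]
    exact pow_le_one₀ (norm_nonneg _) (hε p)

/-- Euler product: the prime part and the prime-power part of the logarithm of `ζ_χ`. -/
lemma helsonZeta_eq_exp {ε : ℕ → ℂ} (hε : ∀ p, ‖ε p‖ ≤ 1) {s : ℂ} (hs : 1 < s.re) :
    helsonZeta (multExt ε) s = exp (primeSum (fun p => ε p) s) * exp (powerSum ε s) := by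
  -- the completely multiplicative function `n ↦ χ(n) n^{-s}`
  let f : ℕ →*₀ ℂ :=
    { toFun := fun n => multExt ε n * (n : ℂ) ^ (-s)
      map_zero' := by simp
      map_one' := by simp
      map_mul' := fun m n => by
        rw [map_mul, Nat.cast_mul, natCast_mul_natCast_cpow]; ring }
  have hf : ∀ n, f n = multExt ε n * (n : ℂ) ^ (-s) := fun n => rfl
  have hsum : Summable (‖f ·‖) := by
    refine Summable.of_nonneg_of_le (fun _ => norm_nonneg _) (fun n => ?_)
      (Real.summable_nat_rpow.2 (show -s.re < -1 by linarith))
    rw [hf]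
    rcases eq_or_ne n 0 with rfl | hn
    · simpa using by positivity
    · rw [norm_mul, norm_natCast_cpow_of_pos (Nat.pos_of_ne_zero hn), neg_re]
      exact mul_le_of_le_one_left (by positivity) (multExt_norm_le hε n)
  have h1 := EulerProduct.exp_tsum_primes_log_eq_tsum hsum
  have h2 : ∑' n, f n = helsonZeta (multExt ε) s := by
    rw [hsum.of_norm.tsum_eq_zero_add, map_zero, zero_add, helsonZeta]
    refine tsum_congr fun n => ?_
    rw [hf]; push_cast; rfl
  rw [← h2, ← h1, ← exp_add, primeSum, powerSum, ← Summable.tsum_add]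
  · congr 1
    refine tsum_congr fun p => ?_
    rw [hf, multExt_prime]; ring
  · exact primeSum_summable (fun p => hε p) hs
  · exact powerSum_summable (fun p => hε p) (show 1 / 2 < s.re by linarith)

/-! ### The Riemann zeta function under the Riemann Hypothesis -/

/-- Under the Riemann Hypothesis `exp (-∑ₚ p^{-s})` continues to `Re s > 1/2` as `(s - 1) g(s)`
with `g` holomorphic and zero-free, namely `g(s) = exp (powerSum) / ((s - 1) ζ(s))`. -/
lemma exists_inverse_zeta (hRH : RiemannHypothesis) :
    ∃ g : ℂ → ℂ, DifferentiableOn ℂ g HP ∧ (∀ s ∈ HP, g s ≠ 0) ∧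
      ∀ s : ℂ, 1 < s.re → (s - 1) * g s = exp (-primeSum (fun _ => 1) s) := by
  let Z : ℂ → ℂ := Function.update (fun s => (s - 1) * riemannZeta s) 1 1
  have hZ1 : Z 1 = 1 := Function.update_self _ _ _
  have hZne : ∀ s, s ≠ 1 → Z s = (s - 1) * riemannZeta s := fun s hs =>
    Function.update_of_ne hs _ _
  have hZev : ∀ s, s ≠ 1 → Z =ᶠ[nhds s] fun s => (s - 1) * riemannZeta s := fun s hs => by
    filter_upwards [isOpen_ne.mem_nhds hs] with w hw using hZne w hw
  have hZd : ∀ s, s ≠ 1 → DifferentiableAt ℂ Z s := fun s hs => by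
    refine DifferentiableAt.congr_of_eventuallyEq ?_ (hZev s hs)
    exact (differentiableAt_id.sub_const 1).mul (differentiableAt_riemannZeta hs)
  have hZa : Differentiable ℂ Z := by
    intro s
    by_cases hs : s = 1
    · subst hs
      refine (analyticAt_of_differentiable_on_punctured_nhds_of_continuousAt ?_ ?_).differentiableAt
      · filter_upwards [self_mem_nhdsWithin] with w hw using hZd w hw
      · exact continuousAt_update_same.2 riemannZeta_residue_one
    · exact hZd s hs
  have hZ0 : ∀ s ∈ HP, Z s ≠ 0 := by
    intro s hs
    have hs' : 1 / 2 < s.re := hs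
    by_cases h1 : s = 1
    · rw [h1, hZ1]; exact one_ne_zero
    · rw [hZne s h1]
      refine mul_ne_zero (sub_ne_zero.2 h1) fun h0 => ?_
      have := hRH s h0 (by
        rintro ⟨n, rfl⟩
        have : ((-2 * ((n : ℂ) + 1)).re) = -2 * ((n : ℝ) + 1) := by simp
        rw [this] at hs'
        have : (0 : ℝ) ≤ n := n.cast_nonneg
        linarith) h1
      linarith
  have h1n : ∀ p : ℕ, ‖(fun _ : ℕ => (1 : ℂ)) p‖ ≤ 1 := by simp
  refine ⟨fun s => exp (powerSum (fun _ => 1) s) / Z s, ?_, ?_, ?_⟩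
  · refine DifferentiableOn.div ?_ hZa.differentiableOn hZ0
    exact (powerSum_differentiableOn (fun p => h1n p)).cexp
  · exact fun s hs => div_ne_zero (exp_ne_zero _) (hZ0 s hs)
  · intro s hs
    have hs1 : s ≠ 1 := by rintro rfl; simp at hs
    have hz : riemannZeta s = exp (primeSum (fun _ => 1) s) * exp (powerSum (fun _ => 1) s) := by
      rw [← helsonZeta_eq_exp h1n hs, zeta_eq_tsum_one_div_nat_add_one_cpow hs, helsonZeta]
      refine tsum_congr fun n => ?_
      rw [multExt_ne_zero _ n.succ_ne_zero]
      simp [Finsupp.prod, cpow_neg]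
    beta_reduce
    rw [hZne s hs1, hz, exp_neg]
    field_simp [sub_ne_zero.2 hs1, exp_ne_zero]

/-- On a convex open subset of `Re z > 1/2` that avoids the point `1` and meets `Re z > 1`, the sum
`∑ₚ p^{-z}` continues to a holomorphic function `Λ` with `exp (-Λ z) = (z - 1) g(z)`. -/
lemma exists_log_on_convex {g : ℂ → ℂ} (hg : DifferentiableOn ℂ g HP) (hg0 : ∀ s ∈ HP, g s ≠ 0)
    (hgp : ∀ s : ℂ, 1 < s.re → (s - 1) * g s = exp (-primeSum (fun _ => 1) s))
    {Ω : Set ℂ} (hΩ : IsOpen Ω) (hΩc : Convex ℝ Ω) (hsub : Ω ⊆ HP) (h1 : (1 : ℂ) ∉ Ω)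
    {z₀ : ℂ} (hz₀ : z₀ ∈ Ω) (hz₀' : 1 < z₀.re) :
    ∃ Λ : ℂ → ℂ, DifferentiableOn ℂ Λ Ω ∧
      (∀ z ∈ Ω, (z - 1) * g z = exp (-Λ z)) ∧
      ∀ z ∈ Ω, 1 < z.re → Λ z = primeSum (fun _ => 1) z := by
  let q : ℂ → ℂ := fun z => (z - 1) * g z
  have hq : DifferentiableOn ℂ q HP := (differentiableOn_id.sub_const 1).mul hg
  have hqb := hq.mono hsub
  have hq0 : ∀ z ∈ Ω, q z ≠ 0 := fun z hz =>
    mul_ne_zero (sub_ne_zero.2 fun h => h1 (h ▸ hz)) (hg0 z (hsub hz))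
  have hdq : DifferentiableOn ℂ (deriv q) Ω := hqb.deriv hΩ
  have hf : DifferentiableOn ℂ (fun z => -(deriv q z / q z)) Ω :=
    (hdq.div hqb hq0).neg
  obtain ⟨Λ₁, hΛ₁⟩ := hΩc.exists_forall_hasDerivWithinAt hf
  let Λ : ℂ → ℂ := fun z => Λ₁ z + (primeSum (fun _ => 1) z₀ - Λ₁ z₀)
  have hΛ0 : Λ z₀ = primeSum (fun _ => 1) z₀ := by simp only [Λ]; ring
  have hΛ : ∀ z ∈ Ω, HasDerivAt Λ (-(deriv q z / q z)) z := fun z hz =>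
    ((hΛ₁ z hz).hasDerivAt (hΩ.mem_nhds hz)).add_const _
  have hΛd : DifferentiableOn ℂ Λ Ω := fun z hz =>
    (hΛ z hz).differentiableAt.differentiableWithinAt
  have hqd : ∀ z ∈ Ω, HasDerivAt q (deriv q z) z := fun z hz =>
    (hqb.differentiableAt (hΩ.mem_nhds hz)).hasDerivAt
  refine ⟨Λ, hΛd, ?_, ?_⟩
  · intro z hz
    have hEq : EqOn (fun z => exp (Λ z) * q z) (fun _ => 1) Ω := by
      refine hΩ.eqOn_of_deriv_eq hΩc.isPreconnected
        (hΛd.cexp.mul hqb) (differentiableOn_const _) ?_ hz₀ ?_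
      · intro w hw
        have := ((hΛ w hw).cexp.mul (hqd w hw)).deriv
        simp only [deriv_const]
        refine Eq.trans this ?_
        have := hq0 w hw
        field_simp
        ring
      · simp only [hΛ0, q]
        rw [hgp z₀ hz₀', ← exp_add, add_neg_cancel, exp_zero]
    have h := hEq hz
    simp only at h
    rw [exp_neg]
    exact eq_inv_of_mul_eq_one_right h
  · intro z hz hz1
    have hPd : DifferentiableOn ℂ (primeSum (fun _ => 1)) {s | 1 < s.re} :=
      primeSum_differentiableOn (C := 1) (by simp)
    have hEq : EqOn Λ (primeSum (fun _ => 1)) (Ω ∩ {s | 1 < s.re}) := by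
      refine (hΩ.inter (isOpen_re_gt 1)).eqOn_of_deriv_eq
        (hΩc.inter (convex_halfSpace_re_gt 1)).isPreconnected
        (hΛd.mono inter_subset_left) (hPd.mono inter_subset_right) ?_ ⟨hz₀, hz₀'⟩ hΛ0
      rintro w ⟨hw, hw1⟩
      have hw1' : {s : ℂ | 1 < s.re} ∈ nhds w := (isOpen_re_gt 1).mem_nhds hw1
      rw [(hΛ w hw).deriv]
      have hev : q =ᶠ[nhds w] fun s => exp (-primeSum (fun _ => 1) s) := by
        filter_upwards [hw1'] with s hs using hgp s hs
      have hd := ((hPd.differentiableAt hw1').hasDerivAt.neg.cexp).deriv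
      rw [hev.deriv_eq]
      refine (congrArg (fun t => -(t / q w)) hd).trans ?_
      rw [hev.eq_of_nhds]
      simp only [Pi.neg_apply]
      field_simp [exp_ne_zero]
    exact hEq ⟨hz, hz1⟩

/-! ### Approximation by Dirichlet polynomials with small coefficients -/

/-- Dual form of approximation by finite combinations of the `e i` with coefficients bounded by
`δ`: by Hahn–Banach it suffices to bound each functional at `x`. -/
lemma approx_of_dual {E ι : Type*} [NormedAddCommGroup E] [NormedSpace ℂ E] (e : ι → E) (x : E)
    {δ : ℝ} (hδ : 0 < δ)
    (h : ∀ ℓ : E →L[ℂ] ℂ, Summable (fun i => ‖ℓ (e i)‖) → ‖ℓ x‖ ≤ δ * ∑' i, ‖ℓ (e i)‖)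
    {η : ℝ} (hη : 0 < η) :
    ∃ c : ι →₀ ℂ, (∀ i, ‖c i‖ ≤ δ) ∧ ‖x - c.sum fun i z => z • e i‖ < η := by
  let A : Set (ι →₀ ℂ) := {c | ∀ i, ‖c i‖ ≤ δ}
  let Φ : (ι →₀ ℂ) →ₗ[ℝ] E := (Finsupp.linearCombination ℂ e).restrictScalars ℝ
  have hA : Convex ℝ A := by
    intro c hc d hd a b ha hb hab i
    calc ‖(a • c + b • d) i‖ = ‖a • c i + b • d i‖ := by simp
      _ ≤ a * ‖c i‖ + b * ‖d i‖ := by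
          refine (norm_add_le _ _).trans ?_
          rw [norm_smul, norm_smul, Real.norm_of_nonneg ha, Real.norm_of_nonneg hb]
      _ ≤ a * δ + b * δ := by gcongr; exacts [hc i, hd i]
      _ = δ := by rw [← add_mul, hab, one_mul]
  have hx : x ∈ closure (Φ '' A) := by
    by_contra hx
    obtain ⟨ℓ, u, hu, hxu⟩ := RCLike.geometric_hahn_banach_closed_point (𝕜 := ℂ)
      (hA.linear_image Φ).closure isClosed_closure hx
    have key : ∀ T : Finset ι, ∑ i ∈ T, ‖ℓ (e i)‖ ≤ u / δ := by
      intro T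
      -- the coefficients of modulus `δ` that align all the phases
      let γ : ι → ℂ := fun i => δ * ((starRingEnd ℂ) (ℓ (e i)) / ‖ℓ (e i)‖)
      let c : ι →₀ ℂ := ∑ i ∈ T, Finsupp.single i (γ i)
      have hγ : ∀ i, ‖γ i‖ ≤ δ := by
        intro i
        simp only [γ, norm_mul, norm_div, RCLike.norm_conj, norm_real, norm_norm,
          Real.norm_of_nonneg hδ.le]
        exact mul_le_of_le_one_right hδ.le (div_self_le_one _)
      have hc : c ∈ A := by
        classical
        intro i
        simp only [c, Finsupp.finsetSum_apply, Finsupp.single_apply, Finset.sum_ite_eq']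
        split_ifs
        · exact hγ i
        · simpa using hδ.le
      have h1 := hu _ (subset_closure (mem_image_of_mem Φ hc))
      have h2 : ℓ (Φ c) = ((δ * ∑ i ∈ T, ‖ℓ (e i)‖ : ℝ) : ℂ) := by
        simp only [Φ, c, LinearMap.restrictScalars_apply, map_sum,
          Finsupp.linearCombination_single, map_smul, smul_eq_mul]
        push_cast
        rw [Finset.mul_sum]
        refine Finset.sum_congr rfl fun i _ => ?_
        simp only [γ]
        by_cases h0 : ℓ (e i) = 0
        · simp [h0]
        · have : (‖ℓ (e i)‖ : ℂ) ≠ 0 := by exact_mod_cast norm_ne_zero_iff.2 h0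
          rw [mul_assoc, div_mul_eq_mul_div, mul_comm ((starRingEnd ℂ) _), Complex.mul_conj,
            Complex.normSq_eq_norm_sq]
          push_cast
          field_simp
      rw [h2] at h1
      simp only [RCLike.re_to_complex, ofReal_re] at h1
      rw [le_div_iff₀ hδ]; linarith
    have hs : Summable fun i => ‖ℓ (e i)‖ :=
      summable_of_sum_le (fun _ => norm_nonneg _) key
    have h3 := h ℓ hs
    have h4 : ∑' i, ‖ℓ (e i)‖ ≤ u / δ := hs.tsum_le_of_sum_le key
    have h5 : RCLike.re (ℓ x) ≤ ‖ℓ x‖ := RCLike.re_le_norm _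
    have h6 : δ * ∑' i, ‖ℓ (e i)‖ ≤ u := by
      calc _ ≤ δ * (u / δ) := by gcongr
        _ = u := by field_simp
    linarith
  obtain ⟨y, ⟨c, hc, rfl⟩, hy⟩ := Metric.mem_closure_iff.1 hx η hη
  refine ⟨c, hc, ?_⟩
  rw [dist_eq_norm] at hy
  simpa [Φ, Finsupp.linearCombination_apply] using hy

open Classical in
/-- The translate `s ↦ Λ (s + t)` as an element of `C(K, ℂ)`, with value `0` if it is not
continuous on `K`. -/
noncomputable def translate (K : Set ℂ) (Λ : ℂ → ℂ) (t : ℂ) : C(K, ℂ) :=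
  if h : Continuous (fun s : K => Λ (s + t)) then ⟨fun s => Λ (s + t), h⟩ else 0

lemma translate_continuous {K Ω : Set ℂ} {Λ : ℂ → ℂ} (hΛ : ContinuousOn Λ Ω) {t : ℂ}
    (ht : ∀ s ∈ K, s + t ∈ Ω) : Continuous (fun s : K => Λ (s + t)) :=
  hΛ.comp_continuous (by fun_prop) (fun s => ht s s.2)

lemma translate_apply {K Ω : Set ℂ} {Λ : ℂ → ℂ} (hΛ : ContinuousOn Λ Ω) {t : ℂ}
    (ht : ∀ s ∈ K, s + t ∈ Ω) (s : K) : translate K Λ t s = Λ (s + t) := by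
  rw [translate, dif_pos (translate_continuous hΛ ht)]; rfl

/-- Translation of a holomorphic function is a holomorphic map into `C(K, ℂ)`. -/
lemma translate_differentiableAt {K Ω : Set ℂ} [CompactSpace K] (hΩ : IsOpen Ω) {Λ : ℂ → ℂ}
    (hΛ : DifferentiableOn ℂ Λ Ω) {t₀ : ℂ} (ht₀ : ∀ s ∈ K, s + t₀ ∈ Ω) :
    DifferentiableAt ℂ (translate K Λ) t₀ := by
  have hK : IsCompact K := isCompact_iff_compactSpace.2 inferInstance
  have hd : DifferentiableOn ℂ (deriv Λ) Ω := hΛ.deriv hΩ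
  have hK' : IsCompact ((fun s => s + t₀) '' K) := hK.image (by fun_prop)
  obtain ⟨r, hr, hrΩ⟩ := hK'.exists_cthickening_subset_open hΩ (by rintro _ ⟨s, hs, rfl⟩; exact ht₀ s hs)
  have hball : ∀ s ∈ K, ∀ w, dist w (s + t₀) ≤ r → w ∈ Metric.cthickening r ((fun s => s + t₀) '' K) :=
    fun s hs w hw => Metric.mem_cthickening_of_dist_le w (s + t₀) r _ ⟨s, hs, rfl⟩ hw
  have huc := (hK'.cthickening (r := r)).uniformContinuousOn_of_continuous
    (hd.continuousOn.mono hrΩ)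
  rw [Metric.uniformContinuousOn_iff_le] at huc
  refine HasDerivAt.differentiableAt (f' := translate K (deriv Λ) t₀) ?_
  rw [hasDerivAt_iff_isLittleO, Asymptotics.isLittleO_iff]
  intro c hc
  obtain ⟨δ, hδ, hδ'⟩ := huc c hc
  filter_upwards [Metric.ball_mem_nhds t₀ (lt_min hr hδ)] with t ht
  have ht' : dist t t₀ < min r δ := ht
  rw [ContinuousMap.norm_le _ (by positivity)]
  intro s
  have hst : ∀ s ∈ K, s + t ∈ Ω := fun s hs => hrΩ (hball s hs _ (by
    rw [dist_add_left]; exact (ht'.trans_le (min_le_left _ _)).le))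
  have hs := s.2
  simp only [ContinuousMap.sub_apply, ContinuousMap.smul_apply, smul_eq_mul,
    translate_apply hΛ.continuousOn hst, translate_apply hΛ.continuousOn ht₀,
    translate_apply hd.continuousOn ht₀]
  set w₀ : ℂ := s + t₀
  have hmem : ∀ w ∈ Metric.ball w₀ (min r δ), w ∈ Metric.cthickening r ((fun s => s + t₀) '' K) :=
    fun w hw => hball s hs w ((Metric.mem_ball.1 hw).trans_le (min_le_left _ _)).le
  have hmv := Convex.norm_image_sub_le_of_norm_hasDerivWithin_le (𝕜 := ℂ)
    (f := fun w => Λ w - w * deriv Λ w₀) (f' := fun w => deriv Λ w - 1 * deriv Λ w₀)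
    (s := Metric.ball w₀ (min r δ)) (x := w₀) (y := s + t) (C := c)
    (fun w hw => by
      have h1 := (hΛ.differentiableAt (hΩ.mem_nhds (hrΩ (hmem w hw)))).hasDerivAt
      exact (h1.sub ((hasDerivAt_id w).mul_const _)).hasDerivWithinAt)
    (fun w hw => by
      have := hδ' w (hmem w hw) w₀ (hball s hs _ (by simp [w₀, hr.le]))
        ((Metric.mem_ball.1 hw).trans_le (min_le_right _ _)).le
      rwa [one_mul, ← dist_eq_norm])
    (convex_ball _ _) (Metric.mem_ball_self (lt_min hr hδ))
    (by rw [Metric.mem_ball, dist_add_left]; exact ht')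
  have e1 : (s : ℂ) + t - w₀ = t - t₀ := by simp only [w₀]; ring
  rw [e1] at hmv
  refine le_of_eq_of_le ?_ hmv
  congr 1
  simp only [w₀]; ring

/-- If `∑ₚ p^{-z}` continues holomorphically to a convex open set `Ω` along which `K + a` can be
moved to the right into `Re z > 1`, then the continuation of the tail `∑_{p ∉ T₀} p^{-(s+a)}` is
approximable on `K` by Dirichlet polynomials over the primes outside `T₀` whose coefficients obey
the bound `δ` valid for the coefficients `p^{-a}` of the tail. By duality only functionals `ℓ` on
`C(K, ℂ)` with `∑ₚ |ℓ(p^{-s})| < ∞` matter. For these `∑ₚ ℓ(p^{-s}) p^{-(a+t)}` converges absolutely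
for `Re t > -Re a`; it equals `ℓ` of the tail translated by `t` when `t` is far to the right, hence
also at `t = 0` by the identity theorem. -/
lemma approx_tail {K Ω : Set ℂ} (hK : IsCompact K) (hΩ : IsOpen Ω) (hΩc : Convex ℝ Ω)
    {Λ : ℂ → ℂ} (hΛ : DifferentiableOn ℂ Λ Ω)
    (hΛp : ∀ z ∈ Ω, 1 < z.re → Λ z = primeSum (fun _ => 1) z)
    {a : ℂ} (ha : 0 < a.re) {T κ : ℝ} (hT0 : 0 ≤ T) (hT : ∀ s ∈ K, s + (a + T) ∈ Ω)
    (h0 : ∀ s ∈ K, s + a ∈ Ω)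
    (hκ : ∀ s ∈ K, κ ≤ s.re) (hκT : 1 < κ + a.re + T) (T₀ : Finset Nat.Primes) {δ : ℝ}
    (hδ : 0 < δ) (hT₀ : ∀ p ∉ T₀, (p : ℝ) ^ (-a.re) ≤ δ) {η : ℝ} (hη : 0 < η) :
    ∃ c : Nat.Primes →₀ ℂ, (∀ p, ‖c p‖ ≤ δ) ∧ (∀ p ∈ T₀, c p = 0) ∧ ∀ s ∈ K,
      ‖Λ (s + a) - ∑ p ∈ T₀, (p : ℂ) ^ (-(s + a)) - c.sum fun p z => z * (p : ℂ) ^ (-s)‖ ≤ η := by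
  classical
  have : CompactSpace K := isCompact_iff_compactSpace.1 hK
  let M : ℂ → ℂ := fun z => Λ z - ∑ p ∈ T₀, (p : ℂ) ^ (-z)
  have hM : DifferentiableOn ℂ M Ω := hΛ.sub
    (DifferentiableOn.fun_sum fun p _ => (differentiable_prime_cpow p).differentiableOn)
  let e : Nat.Primes → C(K, ℂ) := fun p =>
    if p ∈ T₀ then 0 else ⟨fun s => (p : ℂ) ^ (-(s : ℂ)),
      (differentiable_prime_cpow p).continuous.comp continuous_subtype_val⟩
  have he0 : ∀ p ∈ T₀, e p = 0 := fun p hp => if_pos hp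
  have he1 : ∀ p ∉ T₀, ∀ s : K, e p s = (p : ℂ) ^ (-(s : ℂ)) := fun p hp s => by
    simp only [e, if_neg hp]; rfl
  have hen : ∀ p, ‖e p‖ ≤ (p : ℝ) ^ (-κ) := fun p => by
    rw [ContinuousMap.norm_le _ (by positivity)]
    intro s
    by_cases hp : p ∈ T₀
    · rw [he0 p hp]; simp; positivity
    · rw [he1 p hp, norm_prime_cpow]; exact prime_rpow_le (hκ s s.2) p
  have hdual : ∀ ℓ : C(K, ℂ) →L[ℂ] ℂ, Summable (fun p => ‖ℓ (e p)‖) →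
      ‖ℓ (translate K M a)‖ ≤ δ * ∑' p, ‖ℓ (e p)‖ := by
    intro ℓ hℓ
    let U : Set ℂ := {t | -a.re < t.re} ∩ {t | ∀ s ∈ K, s + (a + t) ∈ Ω}
    have hUo : IsOpen U := by
      refine (isOpen_re_gt _).inter ?_
      have hc : Continuous fun q : ℂ × ℂ => q.2 + (a + q.1) := by fun_prop
      refine isOpen_iff_eventually.2 fun t ht => ?_
      refine hK.eventually_forall_of_forall_eventually fun s hs => ?_
      exact (hΩ.preimage hc).mem_nhds (ht s hs)
    have hUc : Convex ℝ U := by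
      refine (convex_halfSpace_re_gt _).inter ?_
      intro t ht t' ht' x y hx hy hxy s hs
      have := hΩc (ht s hs) (ht' s hs) hx hy hxy
      have e2 : s + (a + (x • t + y • t')) = x • (s + (a + t)) + y • (s + (a + t')) := by
        have : (x : ℂ) + y = 1 := by exact_mod_cast hxy
        simp only [real_smul]
        linear_combination (-(s + a)) * this
      rwa [e2]
    let g₁ : ℂ → ℂ := fun t => ℓ (translate K M (a + t))
    let g₂ : ℂ → ℂ := fun t => ∑' p : Nat.Primes, ℓ (e p) * (p : ℂ) ^ (-(a + t))
    have hg₁ : DifferentiableOn ℂ g₁ U := by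
      intro t ht
      refine DifferentiableAt.differentiableWithinAt ?_
      refine ℓ.differentiableAt.comp t ?_
      exact DifferentiableAt.comp (g := translate K M) t (translate_differentiableAt hΩ hM ht.2)
        (differentiableAt_id.const_add a)
    have hg₂ : DifferentiableOn ℂ g₂ U := by
      refine DifferentiableOn.mono (t := {t | -a.re < t.re}) ?_ inter_subset_left
      refine differentiableOn_tsum_of_summable_norm hℓ (fun p => ?_) (isOpen_re_gt _) ?_
      · exact (((differentiable_prime_cpow p).comp
          (differentiable_id.const_add a)).const_mul _).differentiableOn
      · intro p t ht
        have ht' : -a.re < t.re := ht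
        rw [norm_mul, norm_prime_cpow]
        refine mul_le_of_le_one_right (norm_nonneg _) ?_
        refine Real.rpow_le_one_of_one_le_of_nonpos (by exact_mod_cast p.prop.one_le) ?_
        rw [add_re]; linarith
    have hTU : (T : ℂ) ∈ U := ⟨by simp only [mem_ofPred_eq, ofReal_re]; linarith, hT⟩
    have h0U : (0 : ℂ) ∈ U := ⟨by simpa using ha, by simpa using h0⟩
    have hev : g₁ =ᶠ[nhds (T : ℂ)] g₂ := by
      have hop : {t : ℂ | 1 - κ - a.re < t.re} ∈ nhds (T : ℂ) :=
        (isOpen_re_gt _).mem_nhds (by simp only [mem_ofPred_eq, ofReal_re]; linarith)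
      filter_upwards [hUo.mem_nhds hTU, hop] with t htU ht
      have ht' : 1 - κ - a.re < t.re := ht
      have hsum : Summable fun p : Nat.Primes => ((p : ℂ) ^ (-(a + t))) • e p := by
        refine Summable.of_norm_bounded
          (summable_primes_rpow (x := a.re + t.re + κ) (by linarith)) fun p => ?_
        rw [norm_smul, norm_prime_cpow, neg_add, Real.rpow_add (by exact_mod_cast p.prop.pos), add_re]
        gcongr
        exact hen p
      have htr : translate K M (a + t) = ∑' p : Nat.Primes, ((p : ℂ) ^ (-(a + t))) • e p := by
        ext s
        rw [translate_apply hM.continuousOn htU.2]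
        have hre : 1 < ((s : ℂ) + (a + t)).re := by
          have := hκ s s.2
          simp only [add_re]; linarith
        have h1 : (∑' p : Nat.Primes, ((p : ℂ) ^ (-(a + t))) • e p) s =
            ∑' p : Nat.Primes, ((p : ℂ) ^ (-(a + t))) * e p s :=
          (ContinuousMap.evalCLM ℂ s).map_tsum hsum
        rw [h1]
        simp only [M]
        rw [hΛp _ (htU.2 s s.2) hre, primeSum, sub_eq_iff_eq_add]
        have hs1 : Summable fun p : Nat.Primes => (1 : ℂ) * (p : ℂ) ^ (-((s : ℂ) + (a + t))) :=
          primeSum_summable (a := fun _ => 1) (C := 1) (by simp) hre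
        have h2 : ∑ p ∈ T₀, (p : ℂ) ^ (-((s : ℂ) + (a + t))) =
            ∑' p : Nat.Primes, if p ∈ T₀ then (p : ℂ) ^ (-((s : ℂ) + (a + t))) else 0 := by
          rw [tsum_eq_sum (s := T₀) (fun p hp => if_neg hp)]
          exact Finset.sum_congr rfl fun p hp => (if_pos hp).symm
        rw [h2, ← Summable.tsum_add]
        · refine tsum_congr fun p => ?_
          by_cases hp : p ∈ T₀
          · simp [hp, he0 p hp]
          · rw [he1 p hp, if_neg hp, one_mul, add_zero, neg_add, add_comm,
              cpow_add _ _ (by exact_mod_cast p.prop.ne_zero)]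
        · exact hsum.map (ContinuousMap.evalCLM ℂ s) (ContinuousMap.evalCLM ℂ s).continuous
        · exact summable_of_hasFiniteSupport (T₀.finite_toSet.subset fun p hp => by
            by_contra hp'
            exact hp (if_neg hp'))
      simp only [g₁, g₂, htr]
      rw [ℓ.map_tsum hsum]
      refine tsum_congr fun p => ?_
      rw [map_smul, smul_eq_mul, mul_comm]
    have hEq := (hg₁.analyticOnNhd hUo).eqOn_of_preconnected_of_eventuallyEq
      (hg₂.analyticOnNhd hUo) hUc.isPreconnected hTU hev h0U
    simp only [g₁, g₂, add_zero] at hEq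
    rw [hEq, ← tsum_mul_left]
    refine tsum_of_norm_bounded (hℓ.mul_left δ).hasSum fun p => ?_
    by_cases hp : p ∈ T₀
    · simp [he0 p hp]
    · rw [norm_mul, norm_prime_cpow, mul_comm]
      gcongr
      exact hT₀ p hp
  obtain ⟨c, hc, hcx⟩ := approx_of_dual e (translate K M a) hδ hdual hη
  refine ⟨c.filter (· ∉ T₀), fun p => ?_, fun p hp => ?_, fun s hs => ?_⟩
  · by_cases hp : p ∈ T₀
    · rw [Finsupp.filter_apply_neg (· ∉ T₀) _ (by simpa using hp)]; simpa using hδ.le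
    · rw [Finsupp.filter_apply_pos (· ∉ T₀) _ hp]; exact hc p
  · rw [Finsupp.filter_apply_neg (· ∉ T₀) _ (by simpa using hp)]
  · have h1 := (ContinuousMap.norm_coe_le_norm _ (⟨s, hs⟩ : K)).trans hcx.le
    refine le_of_eq_of_le ?_ h1
    congr 1
    rw [ContinuousMap.sub_apply, translate_apply hM.continuousOn h0]
    simp only [M]
    congr 1
    rw [Finsupp.sum_filter_index, Finsupp.sum, Finsupp.support_filter, Finset.sum_filter,
      ContinuousMap.sum_apply]
    refine Finset.sum_congr rfl fun p _ => ?_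
    by_cases hp : p ∈ T₀
    · simp [hp, he0 p hp]
    · simp [hp, he1 p hp]

/-! ### A factor with one prescribed zero -/

/-- An exhaustion of the half-plane `Re s > 1/2` by compact rectangles. -/
def box (k : ℕ) : Set ℂ := Icc (1 / 2 + 1 / ((k : ℝ) + 1)) k ×ℂ Icc (-(k : ℝ)) k

/-- Open rectangles inside the rectangles `box k`. -/
def openBox (k : ℕ) : Set ℂ := Ioo (1 / 2 + 1 / ((k : ℝ) + 1)) k ×ℂ Ioo (-(k : ℝ)) k

/-- A point `ρ` of the upper half-plane lies outside `box k` because it is to the left of it or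
above it. -/
def Outside (ρ : ℂ) (k : ℕ) : Prop := ρ.re < 1 / 2 + 1 / ((k : ℝ) + 1) ∨ (k : ℝ) < ρ.im

lemma exists_finset_rpow_le {x : ℝ} (hx : 0 < x) {δ : ℝ} (hδ : 0 < δ) :
    ∃ T : Finset Nat.Primes, ∀ p ∉ T, (p : ℝ) ^ (-x) ≤ δ := by
  have h1 : Tendsto (fun p : Nat.Primes => (p : ℕ)) cofinite atTop := by
    rw [← Nat.cofinite_eq_atTop]
    exact Nat.Primes.coe_nat_injective.tendsto_cofinite
  have h2 : Tendsto (fun p : Nat.Primes => (p : ℝ) ^ (-x)) cofinite (nhds 0) :=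
    (tendsto_rpow_neg_atTop hx).comp (tendsto_natCast_atTop_atTop.comp h1)
  have h3 : ∀ᶠ p : Nat.Primes in cofinite, (p : ℝ) ^ (-x) ≤ δ := h2.eventually_le_const hδ
  rw [eventually_cofinite] at h3
  exact ⟨h3.toFinset, fun p hp => by simpa using hp⟩

/-- Passage from a branch of the logarithm and an approximating Dirichlet polynomial to the factor
vanishing at `ρ`. The factor is `exp (∑ₚ bₚ p^{-s})` with `bₚ = cₚ - p^{ρ - 1} 1_{p ∉ T₀}`. -/
lemma factor_of_approx {g : ℂ → ℂ} (hg : DifferentiableOn ℂ g HP) (hg0 : ∀ s ∈ HP, g s ≠ 0)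
    (hgp : ∀ s : ℂ, 1 < s.re → (s - 1) * g s = exp (-primeSum (fun _ => 1) s))
    {ρ : ℂ} (hρ : ρ.re < 1) {Ω V K : Set ℂ} (hVK : V ⊆ K) {Λ : ℂ → ℂ}
    (hΛ : DifferentiableOn ℂ Λ Ω) (hΛg : ∀ z ∈ Ω, (z - 1) * g z = exp (-Λ z))
    (hKΩ : ∀ s ∈ K, s + (1 - ρ) ∈ Ω) {δ η : ℝ} (T₀ : Finset Nat.Primes)
    (hT₀ : ∀ p ∉ T₀, (p : ℝ) ^ (-(1 - ρ).re) ≤ δ / 2) (c : Nat.Primes →₀ ℂ)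
    (hc : ∀ p, ‖c p‖ ≤ δ / 2) (hcη : ∀ s ∈ K, ‖Λ (s + (1 - ρ)) -
      ∑ p ∈ T₀, (p : ℂ) ^ (-(s + (1 - ρ))) - c.sum fun p z => z * (p : ℂ) ^ (-s)‖ ≤ η)
    (hreal : ρ.im = 0 → ∀ p, (c p).im = 0) :
    ∃ (b : Nat.Primes → ℂ) (B g' h : ℂ → ℂ), (∀ p, ‖b p‖ ≤ δ) ∧
      (ρ.im = 0 → ∀ p, (b p).im = 0) ∧
      DifferentiableOn ℂ g' HP ∧ (∀ s ∈ HP, g' s ≠ 0) ∧ (∀ s, B s = (s - ρ) * g' s) ∧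
      (∀ s : ℂ, 1 < s.re → B s = exp (primeSum b s)) ∧
      DifferentiableOn ℂ h V ∧ ∀ s ∈ K, B s = exp (h s) ∧ ‖h s‖ ≤ η := by
  classical
  set a : ℂ := 1 - ρ with ha
  have hare : a.re = 1 - ρ.re := by simp [ha]
  have hδ : 0 ≤ δ / 2 := (norm_nonneg _).trans (hc ⟨2, Nat.prime_two⟩)
  let Y : ℂ → ℂ := fun s => ∑ p ∈ T₀, (p : ℂ) ^ (-(s + a)) + c.sum fun p z => z * (p : ℂ) ^ (-s)
  have hY : Differentiable ℂ Y := by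
    refine Differentiable.add (Differentiable.fun_sum fun p _ => ?_)
      (Differentiable.fun_sum fun p _ => (differentiable_prime_cpow p).const_mul _)
    exact (differentiable_prime_cpow p).comp (differentiable_id.add_const a)
  have hmaps : MapsTo (fun s : ℂ => s + a) HP HP := fun s hs => by
    have hs' : 1 / 2 < s.re := hs
    change 1 / 2 < (s + a).re
    rw [add_re, hare]; linarith
  let b₁ : Nat.Primes → ℂ := fun p => if p ∈ T₀ then 0 else -(p : ℂ) ^ (-a)
  have hb₁ : ∀ p, ‖b₁ p‖ ≤ δ / 2 := fun p => by
    simp only [b₁]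
    split_ifs with hp
    · simpa using hδ
    · rw [norm_neg, norm_prime_cpow]; exact hT₀ p hp
  refine ⟨fun p => b₁ p + c p, fun s => (s - ρ) * (g (s + a) * exp (Y s)),
    fun s => g (s + a) * exp (Y s), fun s => -Λ (s + a) + Y s, ?_, ?_, ?_, ?_, fun _ => rfl, ?_, ?_, ?_⟩
  · intro p
    calc _ ≤ δ / 2 + δ / 2 := norm_add_le_of_le (hb₁ p) (hc p)
      _ = δ := by ring
  · intro h0 p
    have hb : (b₁ p).im = 0 := by
      simp only [b₁]
      split_ifs
      · simp
      · have : -a = ((-(1 - ρ.re) : ℝ) : ℂ) := by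
          apply Complex.ext <;> simp [ha, h0]
        rw [this, ← ofReal_natCast, ← ofReal_cpow (by positivity)]
        simp
    simp [hb, hreal h0 p]
  · exact (hg.comp (differentiable_id.add_const a).differentiableOn hmaps).mul
      hY.cexp.differentiableOn
  · exact fun s hs => mul_ne_zero (hg0 _ (hmaps hs)) (exp_ne_zero _)
  · intro s hs
    have hsa : 1 < (s + a).re := by rw [add_re, hare]; linarith
    have e1 : s - ρ = s + a - 1 := by rw [ha]; ring
    beta_reduce
    rw [e1, ← mul_assoc, hgp _ hsa, ← exp_add]
    congr 1
    have hs0 : Summable fun p : Nat.Primes => (1 : ℂ) * (p : ℂ) ^ (-(s + a)) :=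
      primeSum_summable (a := fun _ => 1) (C := 1) (by simp) hsa
    have hs1 := primeSum_summable hb₁ hs
    have hs2 := primeSum_summable hc hs
    have h3 : c.sum (fun p z => z * (p : ℂ) ^ (-s)) = ∑' p : Nat.Primes, c p * (p : ℂ) ^ (-s) := by
      rw [tsum_eq_sum (s := c.support)]
      · rfl
      · intro p hp; simp [Finsupp.notMem_support_iff.1 hp]
    have h2 : ∑ p ∈ T₀, (p : ℂ) ^ (-(s + a)) =
        ∑' p : Nat.Primes, if p ∈ T₀ then (p : ℂ) ^ (-(s + a)) else 0 := by
      rw [tsum_eq_sum (s := T₀) (fun p hp => if_neg hp)]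
      exact Finset.sum_congr rfl fun p hp => (if_pos hp).symm
    have hs3 : Summable fun p : Nat.Primes => if p ∈ T₀ then (p : ℂ) ^ (-(s + a)) else 0 :=
      summable_of_hasFiniteSupport (T₀.finite_toSet.subset fun p hp => by
        by_contra hp'
        exact hp (if_neg hp'))
    simp only [Y]
    rw [h2, h3, primeSum, primeSum, ← tsum_neg, ← hs3.tsum_add hs2,
      ← hs0.neg.tsum_add (hs3.add hs2)]
    refine tsum_congr fun p => ?_
    simp only [b₁]
    split_ifs
    · ring
    · rw [neg_add, cpow_add _ _ (by exact_mod_cast p.prop.ne_zero)]; ring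
  · refine DifferentiableOn.add (DifferentiableOn.neg ?_) hY.differentiableOn
    exact hΛ.comp (differentiable_id.add_const a).differentiableOn (fun s hs => hKΩ s (hVK hs))
  · intro s hs
    constructor
    · have e1 : s - ρ = s + a - 1 := by rw [ha]; ring
      beta_reduce
      rw [e1, ← mul_assoc, hΛg _ (hKΩ s hs), ← exp_add]
    · refine le_of_eq_of_le ?_ (hcη s hs)
      rw [← norm_neg]
      congr 1
      simp only [Y]; ring

lemma isCompact_box (k : ℕ) : IsCompact (box k) := isCompact_Icc.reProdIm isCompact_Icc

lemma openBox_subset_box (k : ℕ) : openBox k ⊆ box k := fun _ hs =>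
  ⟨Ioo_subset_Icc_self hs.1, Ioo_subset_Icc_self hs.2⟩

/-- A function `B = exp (∑ₚ bₚ p^{-s})` whose only zero in `Re s > 1/2` is a simple zero at `ρ`, with
arbitrarily small coefficients and arbitrarily close to `1` on a given box that `ρ` is outside of. -/
lemma exists_factor {g : ℂ → ℂ} (hg : DifferentiableOn ℂ g HP) (hg0 : ∀ s ∈ HP, g s ≠ 0)
    (hgp : ∀ s : ℂ, 1 < s.re → (s - 1) * g s = exp (-primeSum (fun _ => 1) s))
    {ρ : ℂ} (hρ : ρ.re < 1) {k : ℕ} (hk : Outside ρ k)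
    {δ η : ℝ} (hδ : 0 < δ) (hη : 0 < η) :
    ∃ (b : Nat.Primes → ℂ) (B g' h : ℂ → ℂ), (∀ p, ‖b p‖ ≤ δ) ∧
      (ρ.im = 0 → ∀ p, (b p).im = 0) ∧
      DifferentiableOn ℂ g' HP ∧ (∀ s ∈ HP, g' s ≠ 0) ∧ (∀ s, B s = (s - ρ) * g' s) ∧
      (∀ s : ℂ, 1 < s.re → B s = exp (primeSum b s)) ∧
      DifferentiableOn ℂ h (openBox k) ∧ ∀ s ∈ box k, B s = exp (h s) ∧ ‖h s‖ ≤ η := by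
  classical
  have hare : (1 - ρ).re = 1 - ρ.re := by simp
  have hk0 : (0 : ℝ) < 1 / ((k : ℝ) + 1) := by positivity
  obtain ⟨T₁, hT₁⟩ := exists_finset_rpow_le (x := (1 - ρ).re) (by rw [hare]; linarith)
    (half_pos hδ)
  by_cases hre : ρ.re < 1 / 2 + 1 / ((k : ℝ) + 1)
  · -- `box k` lies in the region of absolute convergence, where the tail itself is small.
    have hx : 1 < 1 / 2 + 1 / ((k : ℝ) + 1) + (1 - ρ.re) := by linarith
    set x := 1 / 2 + 1 / ((k : ℝ) + 1) + (1 - ρ.re) with hxdef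
    have hsx := summable_primes_rpow hx
    have htail := tendsto_tsum_compl_atTop_zero (fun p : Nat.Primes => (p : ℝ) ^ (-x))
    obtain ⟨T₀, hT₀, hT01⟩ := ((htail.eventually_lt_const hη).and
      (eventually_ge_atTop T₁)).exists
    have hbox : ∀ s ∈ box k, x ≤ (s + (1 - ρ)).re := fun s hs => by
      have := hs.1.1
      rw [add_re, hare]; linarith
    refine factor_of_approx hg hg0 hgp hρ (openBox_subset_box k) (Ω := {s | 1 < s.re})
      (primeSum_differentiableOn (C := 1) (by simp)) (fun z hz => hgp z hz)
      (fun s hs => hx.trans_le (hbox s hs)) T₀ (fun p hp => hT₁ p fun h => hp (hT01 h)) 0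
      (fun p => by simpa using (half_pos hδ).le) (fun s hs => ?_) (by simp)
    have hs1 := primeSum_summable (a := fun _ => 1) (C := 1) (by simp) (hx.trans_le (hbox s hs))
    have h1 := hs1.sum_add_tsum_subtype_compl T₀
    simp only [one_mul] at h1
    rw [primeSum]
    simp only [one_mul, Finsupp.sum_zero_index, sub_zero]
    rw [← h1, add_sub_cancel_left]
    refine le_trans (tsum_of_norm_bounded (hsx.subtype {p | p ∉ T₀}).hasSum fun p => ?_) hT₀.le
    rw [norm_prime_cpow]
    exact prime_rpow_le (hbox s hs) _
  · -- `box k` lies below `ρ`, and the tail is approximated on it.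
    have him : (k : ℝ) < ρ.im := hk.resolve_left hre
    let Ω : Set ℂ := {z | 1 / 2 < z.re} ∩ {z | z.im < 0}
    have hΩ : IsOpen Ω := (isOpen_re_gt _).inter (isOpen_lt continuous_im continuous_const)
    have hΩc : Convex ℝ Ω := (convex_halfSpace_re_gt _).inter (convex_halfSpace_im_lt _)
    obtain ⟨Λ, hΛ, hΛg, hΛp⟩ := exists_log_on_convex hg hg0 hgp hΩ hΩc inter_subset_left
      (by simp [Ω]) (z₀ := 2 - I) (by constructor <;> norm_num [Ω]) (by norm_num)
    have hmem : ∀ t : ℝ, 0 ≤ t → ∀ s ∈ box k, s + ((1 - ρ) + t) ∈ Ω := fun t ht s hs => by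
      have h1 := hs.1.1
      have h2 := hs.2.2
      constructor
      · change 1 / 2 < (s + ((1 - ρ) + t)).re
        simp only [add_re, hare, ofReal_re]; linarith
      · change (s + ((1 - ρ) + t)).im < 0
        simp only [add_im, sub_im, one_im, ofReal_im]; linarith
    have hmem0 : ∀ s ∈ box k, s + (1 - ρ) ∈ Ω := fun s hs => by simpa using hmem 0 le_rfl s hs
    obtain ⟨c, hc, -, hcη⟩ := approx_tail (isCompact_box k) hΩ hΩc hΛ hΛp (a := 1 - ρ)
      (by rw [hare]; linarith) (T := 1) (κ := 1 / 2) zero_le_one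
      (hmem 1 zero_le_one) hmem0 (fun s hs => by linarith [hs.1.1])
      (by rw [hare]; linarith) T₁ (half_pos hδ) hT₁ hη
    refine factor_of_approx hg hg0 hgp hρ (openBox_subset_box k) hΛ hΛg hmem0 T₁ hT₁ c hc hcη ?_
    intro h0
    have : (0 : ℝ) ≤ k := k.cast_nonneg
    linarith

/-! ### The infinite product of the factors -/

lemma inv_succ_anti {k l : ℕ} (h : k ≤ l) : 1 / ((l : ℝ) + 1) ≤ 1 / ((k : ℝ) + 1) := by
  have : (k : ℝ) ≤ l := by exact_mod_cast h
  gcongr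

lemma isOpen_openBox (k : ℕ) : IsOpen (openBox k) := isOpen_Ioo.reProdIm isOpen_Ioo

lemma openBox_mono {k l : ℕ} (h : k ≤ l) : openBox k ⊆ openBox l := fun s hs => by
  have h1 := inv_succ_anti h
  have h2 : (k : ℝ) ≤ l := by exact_mod_cast h
  obtain ⟨⟨a, b⟩, c, d⟩ := hs
  exact ⟨⟨by linarith, by linarith⟩, by linarith, by linarith⟩

lemma openBox_subset_HP (k : ℕ) : openBox k ⊆ HP := fun s hs => by
  have h0 : (0 : ℝ) < 1 / ((k : ℝ) + 1) := by positivity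
  change 1 / 2 < s.re
  linarith [hs.1.1]

lemma exists_inv_succ_lt {x : ℝ} (hx : 0 < x) (y : ℝ) :
    ∃ k : ℕ, 1 / ((k : ℝ) + 1) < x ∧ y < k := by
  have h1 := (tendsto_one_div_add_atTop_nhds_zero_nat (𝕜 := ℝ)).eventually_lt_const hx
  exact (h1.and (tendsto_natCast_atTop_atTop.eventually_gt_atTop y)).exists

lemma exists_mem_openBox {s : ℂ} (hs : s ∈ HP) : ∃ k, s ∈ openBox k := by
  have hs' : 1 / 2 < s.re := hs
  obtain ⟨k, h1, h2⟩ := exists_inv_succ_lt (x := s.re - 1 / 2) (by linarith) (max s.re |s.im|)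
  have h3 := le_max_left s.re |s.im|
  have h4 := le_max_right s.re |s.im|
  have h5 := abs_le.1 (h4.trans h2.le)
  have h6 := abs_lt.1 (h4.trans_lt h2)
  exact ⟨k, ⟨by linarith, by linarith⟩, h6.1, h6.2⟩

/-- A level function: each point of `S` lies outside the box of its level, and only finitely many
points have level below any given bound. -/
lemma exists_level {S : Set ℂ} (hS : ∀ s ∈ S, 1 / 2 < s.re ∧ s.re < 1) (him : ∀ s ∈ S, 0 ≤ s.im)
    (hacc : ∀ z : ℂ, z.re ≠ 1 / 2 → ¬ AccPt z (𝓟 S)) :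
    ∃ κ : ℂ → ℕ, (∀ ρ ∈ S, Outside ρ (κ ρ)) ∧ ∀ k, {ρ ∈ S | κ ρ < k}.Finite := by
  classical
  have hfin : ∀ k, {ρ ∈ S | ¬ Outside ρ k}.Finite := by
    intro k
    by_contra hinf
    have hsub : {ρ ∈ S | ¬ Outside ρ k} ⊆
        Icc (1 / 2 + 1 / ((k : ℝ) + 1)) 1 ×ℂ Icc (0 : ℝ) k := by
      rintro ρ ⟨hρ, hout⟩
      simp only [Outside, not_or, not_lt] at hout
      exact ⟨⟨hout.1, (hS ρ hρ).2.le⟩, him ρ hρ, hout.2⟩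
    obtain ⟨z, hz, hzacc⟩ := Set.Infinite.exists_accPt_of_subset_isCompact hinf
      (isCompact_Icc.reProdIm isCompact_Icc) hsub
    have h0 : (0 : ℝ) < 1 / ((k : ℝ) + 1) := by positivity
    refine hacc z (by have := hz.1.1; exact ne_of_gt (by linarith)) (hzacc.mono ?_)
    exact principal_mono.2 fun ρ hρ => hρ.1
  have hex : ∀ ρ ∈ S, ∃ k, ¬ Outside ρ k := by
    intro ρ hρ
    obtain ⟨k, h1, h2⟩ := exists_inv_succ_lt (x := ρ.re - 1 / 2) (by linarith [(hS ρ hρ).1]) ρ.im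
    refine ⟨k, ?_⟩
    simp only [Outside, not_or, not_lt]
    exact ⟨by linarith, h2.le⟩
  have hmono : ∀ ρ k l, k ≤ l → ¬ Outside ρ k → ¬ Outside ρ l := by
    intro ρ k l h
    have h1 := inv_succ_anti h
    have h2 : (k : ℝ) ≤ l := by exact_mod_cast h
    simp only [Outside, not_or, not_lt]
    rintro ⟨a, b⟩
    exact ⟨by linarith, by linarith⟩
  refine ⟨fun ρ => if h : ∃ k, ¬ Outside ρ k then Nat.find h - 1 else 0, fun ρ hρ => ?_,
    fun k => (hfin k).subset ?_⟩
  · simp only [dif_pos (hex ρ hρ)]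
    have h0 : Nat.find (hex ρ hρ) ≠ 0 := by
      intro h
      have := Nat.find_spec (hex ρ hρ)
      rw [h] at this
      simp only [Outside, not_or, not_lt] at this
      have h1 := (hS ρ hρ).2
      norm_num at this
      linarith [this.1]
    have := Nat.find_min (hex ρ hρ) (m := Nat.find (hex ρ hρ) - 1) (by omega)
    exact not_not.1 this
  · rintro ρ ⟨hρ, hlt⟩
    simp only [dif_pos (hex ρ hρ)] at hlt
    exact ⟨hρ, hmono ρ _ k (by omega) (Nat.find_spec (hex ρ hρ))⟩

/-- Local shape of the product: near any point it is a finite product of linear factors times a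
zero-free analytic function. -/
lemma product_local {ι : Type*} {ρ : ι → ℂ} {m κ : ι → ℕ} (hκ : ∀ k, {i | κ i < k}.Finite)
    {B g' h : ι → ℂ → ℂ} {u : ι → ℝ} (hu : Summable u)
    (hg' : ∀ i, DifferentiableOn ℂ (g' i) HP) (hg0 : ∀ i, ∀ s ∈ HP, g' i s ≠ 0)
    (hB : ∀ i s, B i s = (s - ρ i) * g' i s)
    (hh : ∀ i, DifferentiableOn ℂ (h i) (openBox (κ i)))
    (hBh : ∀ i, ∀ s ∈ openBox (κ i), B i s = exp (h i s) ∧ m i * ‖h i s‖ ≤ u i)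
    {s₀ : ℂ} (hs₀ : s₀ ∈ HP) :
    ∃ (T : Finset ι) (U : Set ℂ) (Q : ℂ → ℂ), IsOpen U ∧ s₀ ∈ U ∧ DifferentiableOn ℂ Q U ∧
      (∀ s ∈ U, Q s ≠ 0) ∧
      (∀ s ∈ U, HasProd (fun i => B i s ^ m i) ((∏ i ∈ T, (s - ρ i) ^ m i) * Q s)) ∧
      ∀ i ∉ T, ρ i ∉ U := by
  classical
  obtain ⟨k, hk⟩ := exists_mem_openBox hs₀
  set T := (hκ k).toFinset with hT
  have hTc : ∀ i ∉ T, k ≤ κ i := fun i hi => by simpa [hT] using hi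
  let f : ι → ℂ → ℂ := fun i s => if i ∈ T then 0 else m i * h i s
  have hu0 : ∀ i, ∀ s ∈ openBox (κ i), 0 ≤ u i := fun i s hs =>
    le_trans (by positivity) (hBh i s hs).2
  have hf : ∀ i, ∀ s ∈ openBox k, ‖f i s‖ ≤ |u i| := by
    intro i s hs
    by_cases hi : i ∈ T
    · simp [f, hi]
    · simp only [f, hi, if_false, norm_mul, norm_natCast]
      exact ((hBh i s (openBox_mono (hTc i hi) hs)).2).trans (le_abs_self _)
  have hfd : ∀ i, DifferentiableOn ℂ (f i) (openBox k) := by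
    intro i
    by_cases hi : i ∈ T
    · simp only [f, hi, if_true]; exact differentiableOn_const _
    · simp only [f, hi, if_false]
      exact ((hh i).mono (openBox_mono (hTc i hi))).const_mul _
  refine ⟨T, openBox k, fun s => (∏ i ∈ T, g' i s ^ m i) * exp (∑' i, f i s), isOpen_openBox k,
    hk, ?_, ?_, ?_, ?_⟩
  · refine DifferentiableOn.mul (DifferentiableOn.fun_finsetProd fun i _ =>
      ((hg' i).mono (openBox_subset_HP k)).pow _) ?_
    exact (differentiableOn_tsum_of_summable_norm hu.abs hfd (isOpen_openBox k) hf).cexp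
  · intro s hs
    exact mul_ne_zero (Finset.prod_ne_zero_iff.2 fun i _ =>
      pow_ne_zero _ (hg0 i s (openBox_subset_HP k hs))) (exp_ne_zero _)
  · intro s hs
    have h1 : HasProd (fun i => if i ∈ T then B i s ^ m i else 1) (∏ i ∈ T, B i s ^ m i) := by
      have := hasProd_prod_of_ne_finset_one (f := fun i => if i ∈ T then B i s ^ m i else 1)
        (s := T) (L := .unconditional ι) (fun i hi => by simp [hi])
      rwa [Finset.prod_congr rfl fun i hi => if_pos hi] at this
    have h2 : HasProd (fun i => exp (f i s)) (exp (∑' i, f i s)) :=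
      (Summable.of_norm_bounded hu.abs fun i => hf i s hs).hasSum.cexp
    have h3 := h1.mul h2
    rw [Finset.prod_congr rfl fun i _ => by rw [hB i s, mul_pow], Finset.prod_mul_distrib,
      mul_assoc] at h3
    refine h3.congr_fun ?_
    intro i
    by_cases hi : i ∈ T
    · simp [f, hi]
    · simp only [f, hi, if_false, one_mul]
      rw [(hBh i s (openBox_mono (hTc i hi) hs)).1, ← exp_nat_mul]
  · intro i hi hmem
    have := (hBh i (ρ i) (openBox_mono (hTc i hi) hmem)).1
    rw [hB, sub_self, zero_mul] at this
    exact exp_ne_zero _ this.symm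

lemma product_zeros {ι : Type*} {ρ : ι → ℂ} (hρ : Function.Injective ρ) {m κ : ι → ℕ}
    (hm : ∀ i, 1 ≤ m i) (hκ : ∀ k, {i | κ i < k}.Finite)
    {B g' h : ι → ℂ → ℂ} {u : ι → ℝ} (hu : Summable u)
    (hg' : ∀ i, DifferentiableOn ℂ (g' i) HP) (hg0 : ∀ i, ∀ s ∈ HP, g' i s ≠ 0)
    (hB : ∀ i s, B i s = (s - ρ i) * g' i s)
    (hh : ∀ i, DifferentiableOn ℂ (h i) (openBox (κ i)))
    (hBh : ∀ i, ∀ s ∈ openBox (κ i), B i s = exp (h i s) ∧ m i * ‖h i s‖ ≤ u i) :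
    DifferentiableOn ℂ (fun s => ∏' i, B i s ^ m i) HP ∧
      (∀ s ∈ HP, ∏' i, B i s ^ m i = 0 → s ∈ range ρ) ∧
      ∀ i, ρ i ∈ HP → ZeroOfOrder (fun s => ∏' i, B i s ^ m i) (ρ i) (m i) := by
  classical
  refine ⟨fun s hs => ?_, fun s hs h0 => ?_, fun i hi => ?_⟩
  · obtain ⟨T, U, Q, hU, hsU, hQ, -, hp, -⟩ := product_local hκ hu hg' hg0 hB hh hBh hs
    have hd : DifferentiableOn ℂ (fun s => (∏ i ∈ T, (s - ρ i) ^ m i) * Q s) U :=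
      DifferentiableOn.mul (DifferentiableOn.fun_finsetProd fun i _ =>
        (differentiableOn_id.sub_const _).pow _) hQ
    refine DifferentiableAt.differentiableWithinAt ?_
    refine (hd.differentiableAt (hU.mem_nhds hsU)).congr_of_eventuallyEq ?_
    filter_upwards [hU.mem_nhds hsU] with z hz using (hp z hz).tprod_eq
  · obtain ⟨T, U, Q, hU, hsU, hQ, hQ0, hp, -⟩ := product_local hκ hu hg' hg0 hB hh hBh hs
    rw [(hp s hsU).tprod_eq, mul_eq_zero, or_iff_left (hQ0 s hsU), Finset.prod_eq_zero_iff] at h0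
    obtain ⟨i, -, hi⟩ := h0
    exact ⟨i, (sub_eq_zero.1 ((pow_eq_zero_iff (Nat.one_le_iff_ne_zero.1 (hm i))).1 hi)).symm⟩
  · obtain ⟨T, U, Q, hU, hsU, hQ, hQ0, hp, hT⟩ := product_local hκ hu hg' hg0 hB hh hBh hi
    have hiT : i ∈ T := by
      by_contra hc
      exact hT i hc hsU
    refine ⟨fun s => (∏ j ∈ T.erase i, (s - ρ j) ^ m j) * Q s, ?_, ?_, ?_⟩
    · have hd : DifferentiableOn ℂ (fun s => (∏ j ∈ T.erase i, (s - ρ j) ^ m j) * Q s) U :=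
        DifferentiableOn.mul (DifferentiableOn.fun_finsetProd fun i _ =>
          (differentiableOn_id.sub_const _).pow _) hQ
      exact hd.analyticAt (hU.mem_nhds hsU)
    · refine mul_ne_zero (Finset.prod_ne_zero_iff.2 fun j hj => pow_ne_zero _ ?_) (hQ0 _ hsU)
      exact sub_ne_zero.2 fun h => (Finset.mem_erase.1 hj).1 (hρ h).symm
    · filter_upwards [hU.mem_nhds hsU] with z hz
      rw [(hp z hz).tprod_eq, ← Finset.mul_prod_erase T _ hiT, mul_assoc]

/-- The product of the factors is the exponential of a prime sum on `Re s > 1`. -/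
lemma product_eq_exp {ι : Type*} {m : ι → ℕ} {b : ι → Nat.Primes → ℂ} {u : ι → ℝ}
    (hu : Summable u) (hb : ∀ i p, m i * ‖b i p‖ ≤ u i) {B : ι → ℂ → ℂ} {s : ℂ}
    (hs : 1 < s.re) (hB : ∀ i, B i s = exp (primeSum (b i) s)) :
    ∏' i, B i s ^ m i = exp (primeSum (fun p => ∑' i, m i * b i p) s) := by
  have hp : Summable fun p : Nat.Primes => (p : ℝ) ^ (-s.re) := summable_primes_rpow hs
  have hbd : ∀ i p, ‖(m i : ℂ) * b i p‖ ≤ u i := fun i p => by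
    simpa only [norm_mul, norm_natCast] using hb i p
  have hu0 : ∀ i, 0 ≤ u i := fun i => le_trans (norm_nonneg _) (hbd i ⟨2, Nat.prime_two⟩)
  have hsum : Summable fun q : ι × Nat.Primes => m q.1 * b q.1 q.2 * (q.2 : ℂ) ^ (-s) := by
    refine Summable.of_norm_bounded (hu.mul_of_nonneg hp hu0 fun p => by positivity) fun q => ?_
    rw [norm_mul, norm_prime_cpow]
    exact mul_le_mul_of_nonneg_right (hbd _ _) (by positivity)
  have h1 : HasSum (fun i => m i * primeSum (b i) s)
      (∑' q : ι × Nat.Primes, m q.1 * b q.1 q.2 * (q.2 : ℂ) ^ (-s)) := by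
    refine hsum.hasSum.prod_fiberwise fun i => ?_
    have e : m i * primeSum (b i) s = ∑' p : Nat.Primes, m i * b i p * (p : ℂ) ^ (-s) := by
      rw [primeSum, ← tsum_mul_left]
      simp only [mul_assoc]
    rw [e]
    exact (hsum.prod_factor i).hasSum
  have h2 : ∑' q : ι × Nat.Primes, m q.1 * b q.1 q.2 * (q.2 : ℂ) ^ (-s) =
      primeSum (fun p => ∑' i, m i * b i p) s := by
    refine hsum.tsum_prod.trans ?_
    refine (Summable.tsum_comm
      (f := fun i (p : Nat.Primes) => m i * b i p * (p : ℂ) ^ (-s)) hsum).symm.trans ?_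
    exact tsum_congr fun p => tsum_mul_right
  rw [← h2, ← h1.cexp.tprod_eq]
  refine tprod_congr fun i => ?_
  rw [Function.comp_apply, hB i, exp_nat_mul]

/-- A function with prescribed zeros in the closed upper half of the strip, whose logarithm is a
prime sum with small coefficients. -/
lemma exists_upper_product {g : ℂ → ℂ} (hg : DifferentiableOn ℂ g HP) (hg0 : ∀ s ∈ HP, g s ≠ 0)
    (hgp : ∀ s : ℂ, 1 < s.re → (s - 1) * g s = exp (-primeSum (fun _ => 1) s))
    {S : Set ℂ} (hS : ∀ s ∈ S, 1 / 2 < s.re ∧ s.re < 1) (him : ∀ s ∈ S, 0 ≤ s.im)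
    (hacc : ∀ z : ℂ, z.re ≠ 1 / 2 → ¬ AccPt z (𝓟 S)) {m : ℂ → ℕ} (hm : ∀ s ∈ S, 1 ≤ m s)
    {τ : ℝ} (hτ : 0 < τ) :
    ∃ (a : Nat.Primes → ℂ) (G : ℂ → ℂ), (∀ p, ‖a p‖ ≤ τ) ∧
      ((∀ s ∈ S, s.im = 0) → ∀ p, (a p).im = 0) ∧ DifferentiableOn ℂ G HP ∧
      (∀ s ∈ HP, G s = 0 → s ∈ S) ∧ (∀ s ∈ S, ZeroOfOrder G s (m s)) ∧
      ∀ s : ℂ, 1 < s.re → G s = exp (primeSum a s) := by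
  obtain ⟨κ, hκo, hκf⟩ := exists_level hS him hacc
  have hcount : S.Countable := by
    have : S ⊆ ⋃ k : ℕ, {ρ ∈ S | κ ρ < k} := fun ρ hρ =>
      mem_iUnion.2 ⟨κ ρ + 1, hρ, Nat.lt_succ_self _⟩
    exact (countable_iUnion fun k => (hκf k).countable).mono this
  obtain ⟨u, hu0, c, hc, hcτ⟩ := hcount.exists_pos_hasSum_le hτ
  have hpos : ∀ i : S, 0 < u i / (m i + 1) := fun i => div_pos (hu0 _) (by positivity)
  choose b B g' h hb hbr hg' hg'0 hB hBp hh hBh using fun i : S =>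
    exists_factor hg hg0 hgp (hS i i.2).2 (hκo i i.2) (hpos i) (hpos i)
  have hle : ∀ i : S, ∀ x ≤ u i / ((m i : ℝ) + 1), m i * x ≤ u i := by
    intro i x hx
    have h1 : (m i : ℝ) * x ≤ m i * (u i / (m i + 1)) := by gcongr
    have h2 : (m i : ℝ) * (u i / (m i + 1)) ≤ (m i + 1) * (u i / (m i + 1)) := by
      have := (hpos i).le
      gcongr; linarith
    rw [mul_div_cancel₀ _ (by positivity : (m i : ℝ) + 1 ≠ 0)] at h2
    exact h1.trans h2
  have hκ' : ∀ k, {i : S | κ i < k}.Finite := fun k => by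
    refine Finite.of_finite_image ((hκf k).subset ?_) Subtype.val_injective.injOn (f := Subtype.val)
    rintro _ ⟨i, hi, rfl⟩
    exact ⟨i.2, hi⟩
  obtain ⟨h1, h2, h3⟩ := product_zeros (ρ := fun i : S => (i : ℂ)) Subtype.val_injective
    (m := fun i => m i) (κ := fun i => κ i) (fun i => hm i i.2) hκ' hc.summable hg' hg'0 hB hh
    (fun i s hs => ⟨(hBh i s (openBox_subset_box _ hs)).1,
      hle i _ (hBh i s (openBox_subset_box _ hs)).2⟩)
  refine ⟨fun p => ∑' i : S, m i * b i p, fun s => ∏' i : S, B i s ^ m i, fun p => ?_,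
    fun hr p => ?_, h1, fun s hs h0 => ?_, fun s hs => h3 ⟨s, hs⟩ (hS s hs).1, fun s hs => ?_⟩
  · refine (tsum_of_norm_bounded hc fun i => ?_).trans hcτ
    simpa only [norm_mul, norm_natCast] using hle i _ (hb i p)
  · have hz : ∀ i : S, (m i : ℂ) * b i p = ((m i * (b i p).re : ℝ) : ℂ) := fun i => by
      apply Complex.ext <;> simp [hbr i (hr i i.2) p]
    simp only [hz, ← ofReal_tsum, ofReal_im]
  · simpa using h2 s hs h0
  · exact product_eq_exp hc.summable (fun i p => hle i _ (hb i p)) hs fun i => hBp i s hs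

/-! ### Real symmetry -/

lemma zeroOfOrder_mul {F H : ℂ → ℂ} {s : ℂ} {k : ℕ} (hF : ZeroOfOrder F s k)
    (hH : AnalyticAt ℂ H s) (h0 : H s ≠ 0) : ZeroOfOrder (fun z => F z * H z) s k := by
  obtain ⟨g, hg, hg0, he⟩ := hF
  refine ⟨fun z => g z * H z, hg.mul hH, mul_ne_zero hg0 h0, ?_⟩
  filter_upwards [he] with z hz
  rw [hz, mul_assoc]

lemma differentiableOn_conj_conj {F : ℂ → ℂ} {U : Set ℂ} (hU : IsOpen U)
    (hF : DifferentiableOn ℂ F U) {V : Set ℂ} (hV : ∀ s ∈ V, (starRingEnd ℂ) s ∈ U) :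
    DifferentiableOn ℂ (fun s => (starRingEnd ℂ) (F ((starRingEnd ℂ) s))) V := fun s hs =>
  (differentiableAt_conj_conj_iff.2
    (hF.differentiableAt (hU.mem_nhds (hV s hs)))).differentiableWithinAt

lemma zeroOfOrder_conj {F : ℂ → ℂ} {s : ℂ} {k : ℕ} (hF : ZeroOfOrder F ((starRingEnd ℂ) s) k) :
    ZeroOfOrder (fun z => (starRingEnd ℂ) (F ((starRingEnd ℂ) z))) s k := by
  obtain ⟨g, hg, hg0, he⟩ := hF
  have htend : Tendsto (starRingEnd ℂ) (nhds s) (nhds ((starRingEnd ℂ) s)) :=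
    continuous_conj.tendsto s
  refine ⟨fun z => (starRingEnd ℂ) (g ((starRingEnd ℂ) z)), ?_, ?_, ?_⟩
  · rw [analyticAt_iff_eventually_differentiableAt] at hg ⊢
    filter_upwards [htend.eventually hg] with z hz
    exact differentiableAt_conj_conj_iff.2 hz
  · simpa using hg0
  · filter_upwards [htend.eventually he] with z hz
    rw [hz]
    simp

lemma primeSum_conj (a : Nat.Primes → ℂ) (s : ℂ) :
    (starRingEnd ℂ) (primeSum a ((starRingEnd ℂ) s)) =
      primeSum (fun p => (starRingEnd ℂ) (a p)) s := by
  rw [primeSum, conj_tsum, primeSum]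
  refine tsum_congr fun p => ?_
  rw [map_mul, ← map_neg, cpow_conj _ _ (by simp [natCast_arg, Real.pi_ne_zero.symm])]
  simp

lemma primeSum_add {a b : Nat.Primes → ℂ} {C D : ℝ} (ha : ∀ p, ‖a p‖ ≤ C) (hb : ∀ p, ‖b p‖ ≤ D)
    {s : ℂ} (hs : 1 < s.re) :
    primeSum (fun p => a p + b p) s = primeSum a s + primeSum b s := by
  simp only [primeSum, add_mul]
  exact (primeSum_summable ha hs).tsum_add (primeSum_summable hb hs)

/-- For a set of zeros symmetric about the real axis the coefficients can be chosen real: the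
product over the open upper half-plane is multiplied by its complex-conjugate reflection. -/
lemma exists_symm_product {g : ℂ → ℂ} (hg : DifferentiableOn ℂ g HP) (hg0 : ∀ s ∈ HP, g s ≠ 0)
    (hgp : ∀ s : ℂ, 1 < s.re → (s - 1) * g s = exp (-primeSum (fun _ => 1) s))
    {S : Set ℂ} (hS : ∀ s ∈ S, 1 / 2 < s.re ∧ s.re < 1)
    (hacc : ∀ z : ℂ, z.re ≠ 1 / 2 → ¬ AccPt z (𝓟 S)) {m : ℂ → ℕ} (hm : ∀ s ∈ S, 1 ≤ m s)
    (hsymm : ∀ s : ℂ, s ∈ S ↔ (starRingEnd ℂ) s ∈ S)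
    (hsymm' : ∀ s ∈ S, m ((starRingEnd ℂ) s) = m s) {τ : ℝ} (hτ : 0 < τ) :
    ∃ (a : Nat.Primes → ℝ) (G : ℂ → ℂ), (∀ p, |a p| ≤ τ) ∧ DifferentiableOn ℂ G HP ∧
      (∀ s ∈ HP, G s = 0 ↔ s ∈ S) ∧ (∀ s ∈ S, ZeroOfOrder G s (m s)) ∧
      ∀ s : ℂ, 1 < s.re → G s = exp (primeSum (fun p => a p) s) := by
  have hτ3 : 0 < τ / 3 := by positivity
  obtain ⟨a₁, G₁, ha₁, -, hG₁, hz₁, ho₁, hp₁⟩ := exists_upper_product hg hg0 hgp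
    (S := {s ∈ S | 0 < s.im}) (fun s hs => hS s hs.1) (fun s hs => hs.2.le)
    (fun z hz h => hacc z hz (h.mono (principal_mono.2 fun s hs => hs.1)))
    (fun s hs => hm s hs.1) hτ3
  obtain ⟨a₀, G₀, ha₀, har, hG₀, hz₀, ho₀, hp₀⟩ := exists_upper_product hg hg0 hgp
    (S := {s ∈ S | s.im = 0}) (fun s hs => hS s hs.1) (fun s hs => hs.2.ge)
    (fun z hz h => hacc z hz (h.mono (principal_mono.2 fun s hs => hs.1)))
    (fun s hs => hm s hs.1) hτ3
  replace har := har fun s hs => hs.2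
  let G₂ : ℂ → ℂ := fun s => (starRingEnd ℂ) (G₁ ((starRingEnd ℂ) s))
  have hHPc : ∀ s ∈ HP, (starRingEnd ℂ) s ∈ HP := fun s hs => by
    change 1 / 2 < ((starRingEnd ℂ) s).re
    rw [conj_re]; exact hs
  have hG₂ : DifferentiableOn ℂ G₂ HP := differentiableOn_conj_conj isOpen_HP hG₁ hHPc
  have hz₂ : ∀ s ∈ HP, G₂ s = 0 → s ∈ S ∧ s.im < 0 := by
    intro s hs h
    have := hz₁ _ (hHPc s hs) (by simpa [G₂] using h)
    exact ⟨(hsymm s).2 this.1, by simpa using this.2⟩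
  have ho₂ : ∀ s ∈ S, s.im < 0 → ZeroOfOrder G₂ s (m s) := by
    intro s hs h
    rw [← hsymm' s hs]
    exact zeroOfOrder_conj (ho₁ _ ⟨(hsymm s).1 hs, by simpa using h⟩)
  have hSHP : ∀ s ∈ S, s ∈ HP := fun s hs => (hS s hs).1
  have hA : ∀ {F : ℂ → ℂ}, DifferentiableOn ℂ F HP → ∀ s ∈ S, AnalyticAt ℂ F s := fun hF s hs =>
    hF.analyticAt (isOpen_HP.mem_nhds (hSHP s hs))
  have hord : ∀ s ∈ S, ZeroOfOrder (fun s => G₁ s * G₂ s * G₀ s) s (m s) := by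
    intro s hs
    have hHs := hSHP s hs
    rcases lt_trichotomy s.im 0 with h | h | h
    · have := zeroOfOrder_mul (zeroOfOrder_mul (ho₂ s hs h) (hA hG₁ s hs)
        (fun h0 => absurd (hz₁ s hHs h0).2 h.not_gt)) (hA hG₀ s hs)
        (fun h0 => h.ne (hz₀ s hHs h0).2)
      simpa only [mul_comm (G₂ _) (G₁ _)] using this
    · have := zeroOfOrder_mul (ho₀ s ⟨hs, h⟩) ((hA hG₁ s hs).mul (hA hG₂ s hs))
        (mul_ne_zero (fun h0 => (hz₁ s hHs h0).2.ne' h) (fun h0 => (hz₂ s hHs h0).2.ne h))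
      simpa only [Pi.mul_apply, mul_comm (G₀ _)] using this
    · exact zeroOfOrder_mul (zeroOfOrder_mul (ho₁ s ⟨hs, h⟩) (hA hG₂ s hs)
        (fun h0 => absurd (hz₂ s hHs h0).2 h.not_gt)) (hA hG₀ s hs)
        (fun h0 => h.ne' (hz₀ s hHs h0).2)
  refine ⟨fun p => 2 * (a₁ p).re + (a₀ p).re, fun s => G₁ s * G₂ s * G₀ s, fun p => ?_,
    (hG₁.mul hG₂).mul hG₀, fun s hs => ⟨fun h => ?_, fun h => ?_⟩, hord, fun s hs => ?_⟩
  · have h1 := (abs_re_le_norm (a₁ p)).trans (ha₁ p)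
    have h0 := (abs_re_le_norm (a₀ p)).trans (ha₀ p)
    rw [abs_le] at h1 h0 ⊢
    constructor <;> linarith
  · rcases mul_eq_zero.1 h with h | h
    · rcases mul_eq_zero.1 h with h | h
      · exact (hz₁ s hs h).1
      · exact (hz₂ s hs h).1
    · exact (hz₀ s hs h).1
  · obtain ⟨f, -, -, hf⟩ := hord s h
    rw [hf.self_of_nhds, sub_self, zero_pow (Nat.one_le_iff_ne_zero.1 (hm s h)), zero_mul]
  · have hs' : 1 < ((starRingEnd ℂ) s).re := by rwa [conj_re]
    have hG2 : G₂ s = exp (primeSum (fun p => (starRingEnd ℂ) (a₁ p)) s) := by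
      simp only [G₂]
      rw [hp₁ _ hs', ← exp_conj, primeSum_conj]
    have hc : ∀ p, ‖(starRingEnd ℂ) (a₁ p)‖ ≤ τ / 3 := fun p => by rw [norm_conj]; exact ha₁ p
    beta_reduce
    rw [hp₁ s hs, hG2, hp₀ s hs, ← exp_add, ← exp_add, ← primeSum_add ha₁ hc hs,
      ← primeSum_add (C := τ / 3 + τ / 3)
        (fun p => (norm_add_le _ _).trans (add_le_add (ha₁ p) (hc p))) ha₀ hs]
    congr 2
    funext p
    apply Complex.ext <;> simp [har p]
    ring

/-! ### Rounding the coefficients to signs -/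

/-- A Dirichlet series supported on the primes with bounded partial sums of its coefficients
continues analytically to the half-plane `Re s > 1/2`. -/
lemma exists_continuation_of_bounded {f : ℕ → ℂ} (hf : ∀ n, ¬ n.Prime → f n = 0) {C D : ℝ}
    (hfC : ∀ n, ‖f n‖ ≤ C) (hfD : ∀ n, ‖∑ k ∈ Finset.Icc 1 n, f k‖ ≤ D) :
    ∃ R : ℂ → ℂ, DifferentiableOn ℂ R HP ∧
      ∀ s : ℂ, 1 < s.re → R s = primeSum (fun p => f p) s := by
  let A : ℝ → ℂ := fun t => ∑ k ∈ Finset.Icc 1 ⌊t⌋₊, f k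
  have hA0 : ∀ t : ℝ, t ≤ 1 → A t = 0 := by
    intro t ht
    refine Finset.sum_eq_zero fun k hk => ?_
    have h1 : k ≤ 1 := (Finset.mem_Icc.1 hk).2.trans (Nat.floor_le_one_of_le_one ht)
    have h2 : k = 1 := le_antisymm h1 (Finset.mem_Icc.1 hk).1
    exact hf k (h2 ▸ Nat.not_prime_one)
  have hAm : Measurable A :=
    (measurable_from_nat (f := fun n : ℕ => ∑ k ∈ Finset.Icc 1 n, f k)).comp Nat.measurable_floor
  have hAl : MeasureTheory.LocallyIntegrableOn A (Ioi 0) := by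
    refine MeasureTheory.LocallyIntegrable.locallyIntegrableOn ?_ _
    refine (MeasureTheory.locallyIntegrable_const D).mono hAm.aestronglyMeasurable ?_
    exact Eventually.of_forall fun t => (hfD _).trans (le_abs_self D)
  refine ⟨fun s => s * mellin A (-s), fun s hs => ?_, fun s hs => ?_⟩
  · have hs' : 1 / 2 < s.re := hs
    have hd : DifferentiableAt ℂ (mellin A) (-s) := by
      refine mellin_differentiableAt_of_isBigO_rpow (a := 0) (b := -s.re - 1) hAl ?_ ?_ ?_ ?_
      · refine Asymptotics.IsBigO.of_bound D (Eventually.of_forall fun t => ?_)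
        simpa using hfD ⌊t⌋₊
      · rw [neg_re]; linarith
      · refine Asymptotics.IsBigO.of_bound 1 ?_
        have : ∀ᶠ t : ℝ in nhdsWithin 0 (Ioi 0), t < 1 :=
          nhdsWithin_le_nhds (Iio_mem_nhds one_pos)
        filter_upwards [this] with t ht
        rw [hA0 t ht.le, norm_zero]
        positivity
      · rw [neg_re]; linarith
    exact (differentiableAt_id.mul (hd.comp s differentiableAt_id.neg)).differentiableWithinAt
  · have hL : LSeriesSummable f s := LSeriesSummable_of_bounded_of_one_lt_re
      (fun n _ => hfC n) hs
    have h1 := LSeries_eq_mul_integral f le_rfl (by linarith : (0 : ℝ) < s.re) hL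
      (Asymptotics.IsBigO.of_bound D (Eventually.of_forall fun n => by simpa using hfD n))
    have h2 : LSeries f s = primeSum (fun p => f p) s := by
      rw [LSeries, primeSum]
      simp only [LSeries.term_def₀ (hf 0 Nat.not_prime_zero)]
      refine (tsum_subtype_eq_of_support_subset (s := {p : ℕ | p.Prime})
        (f := fun n : ℕ => f n * (n : ℂ) ^ (-s)) fun n hn => ?_).symm
      by_contra hc
      exact hn (by simp [hf n hc])
    have h3 : mellin A (-s) =
        ∫ t in Ioi (1 : ℝ), (∑ k ∈ Finset.Icc 1 ⌊t⌋₊, f k) * (t : ℂ) ^ (-(s + 1)) := by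
      refine (MeasureTheory.setIntegral_eq_of_subset_of_forall_sdiff_eq_zero measurableSet_Ioi
        (Ioi_subset_Ioi zero_le_one) ?_).trans ?_
      · rintro t ⟨-, ht⟩
        simp [hA0 t (not_lt.1 ht)]
      · refine MeasureTheory.setIntegral_congr_fun measurableSet_Ioi fun t _ => ?_
        simp only [A, smul_eq_mul]
        rw [mul_comm, neg_add']
    beta_reduce
    rw [← h2, h1, h3]

/-- The discrepancy of the greedy rounding of `a` to signs along the primes below `n`. -/
noncomputable def discrepancy (a : ℕ → ℝ) : ℕ → ℝ
  | 0 => 0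
  | n + 1 => discrepancy a n +
      if n.Prime then (if discrepancy a n ≤ 0 then 1 else -1) - a n else 0

lemma abs_discrepancy_le {a : ℕ → ℝ} (ha : ∀ n, |a n| ≤ 1) (n : ℕ) : |discrepancy a n| ≤ 2 := by
  induction n with
  | zero => simp [discrepancy]
  | succ n ih =>
    rw [discrepancy]
    have h := abs_le.1 (ha n)
    rw [abs_le] at ih ⊢
    split_ifs with h1 h2
    · constructor <;> linarith
    · push Not at h2
      constructor <;> linarith
    · simpa using ih

/-- Real coefficients in `[-1, 1]` can be rounded to signs at the cost of an analytic error. -/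
lemma exists_signs {a : Nat.Primes → ℝ} (ha : ∀ p, |a p| ≤ 1) :
    ∃ (ε : ℕ → ℂ) (R : ℂ → ℂ), (∀ n, ε n = 1 ∨ ε n = -1) ∧ DifferentiableOn ℂ R HP ∧
      ∀ s : ℂ, 1 < s.re → R s = primeSum (fun p => ε p - a p) s := by
  let a' : ℕ → ℝ := fun n => if h : n.Prime then a ⟨n, h⟩ else 0
  have ha' : ∀ n, |a' n| ≤ 1 := fun n => by
    by_cases h : n.Prime
    · simpa [a', h] using ha ⟨n, h⟩
    · simp [a', h]
  have haa : ∀ p : Nat.Primes, a' p = a p := fun p => dif_pos p.2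
  let ε : ℕ → ℝ := fun n => if discrepancy a' n ≤ 0 then 1 else -1
  let f : ℕ → ℝ := fun n => if n.Prime then ε n - a' n else 0
  have hε : ∀ n, ε n = 1 ∨ ε n = -1 := fun n => by
    simp only [ε]; split_ifs <;> simp
  have hf : ∀ n, |f n| ≤ 2 := fun n => by
    have h := abs_le.1 (ha' n)
    rw [abs_le]
    simp only [f]
    split_ifs
    · rcases hε n with h1 | h1 <;> rw [h1] <;> constructor <;> linarith
    · norm_num
  have hsum : ∀ n, ∑ k ∈ Finset.Icc 1 n, f k = discrepancy a' (n + 1) := by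
    intro n
    induction n with
    | zero => simp [discrepancy, Nat.not_prime_zero]
    | succ n ih => rw [Finset.sum_Icc_succ_top (by omega), ih, discrepancy.eq_2 a' (n + 1)]
  obtain ⟨R, hR, hRs⟩ := exists_continuation_of_bounded (f := fun n => (f n : ℂ))
    (fun n hn => by simp [f, hn]) (C := 2) (D := 2)
    (fun n => by rw [norm_real]; exact hf n)
    (fun n => by rw [← ofReal_sum, norm_real, hsum]; exact abs_discrepancy_le ha' _)
  refine ⟨fun n => ε n, R, fun n => ?_, hR, fun s hs => ?_⟩
  · rcases hε n with h | h <;> simp [h]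
  · rw [hRs s hs]
    congr 1
    funext p
    simp [f, p.2, haa]

/-! ### Assembly of the Helson zeta function -/

lemma multExt_sign {ε : ℕ → ℂ} (hε : ∀ n, ε n = 1 ∨ ε n = -1) {n : ℕ} (hn : n ≠ 0) :
    multExt ε n = 1 ∨ multExt ε n = -1 := by
  rw [multExt_ne_zero _ hn, Finsupp.prod]
  refine Finset.prod_induction _ (fun x : ℂ => x = 1 ∨ x = -1) ?_ (Or.inl rfl) fun p _ => ?_
  · rintro x y (rfl | rfl) (rfl | rfl) <;> simp
  · rcases hε p with h | h
    · simp [h]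
    · rw [h]; exact neg_one_pow_eq_or ℂ _

end HelsonPrescribed

open HelsonPrescribed

theorem helson_zeta_prescribed_zeros_poles_pm_one_RH
    (hRH : RiemannHypothesis)
    (SZ SP : Set ℂ) (mZ mP : ℂ → ℕ)
    (hZstrip : ∀ s ∈ SZ, 1 / 2 < s.re ∧ s.re < 1)
    (hPstrip : ∀ s ∈ SP, 1 / 2 < s.re ∧ s.re < 1)
    (hmZ : ∀ s ∈ SZ, 1 ≤ mZ s) (hmP : ∀ s ∈ SP, 1 ≤ mP s)
    (hdisj : Disjoint SZ SP)
    (hacc : ∀ z : ℂ, z.re ≠ 1 / 2 → ¬ AccPt z (𝓟 (SZ ∪ SP)))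
    (hZsymm : ∀ s : ℂ, s ∈ SZ ↔ (starRingEnd ℂ) s ∈ SZ)
    (hZsymm' : ∀ s ∈ SZ, mZ ((starRingEnd ℂ) s) = mZ s)
    (hPsymm : ∀ s : ℂ, s ∈ SP ↔ (starRingEnd ℂ) s ∈ SP)
    (hPsymm' : ∀ s ∈ SP, mP ((starRingEnd ℂ) s) = mP s) :
    ∃ (χ : ℕ → ℂ) (F : ℂ → ℂ),
      CompletelyMultiplicative χ ∧
      (∀ n : ℕ, 1 ≤ n → χ n ∈ ({1, -1} : Set ℂ)) ∧
      MeromorphicOn F {s : ℂ | 1 / 2 < s.re} ∧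
      (∀ s : ℂ, 1 < s.re → F s = helsonZeta χ s) ∧
      AnalyticOnNhd ℂ F ({s : ℂ | 1 / 2 < s.re} \ SP) ∧
      (∀ s : ℂ, 1 / 2 < s.re → s ∉ SP → (F s = 0 ↔ s ∈ SZ)) ∧
      (∀ s ∈ SZ, ZeroOfOrder F s (mZ s)) ∧
      (∀ s ∈ SP, PoleOfOrder F s (mP s)) := by
  obtain ⟨g, hg, hg0, hgp⟩ := exists_inverse_zeta hRH
  obtain ⟨aZ, GZ, haZ, hGZ, hzZ, hoZ, hpZ⟩ := exists_symm_product hg hg0 hgp hZstrip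
    (fun z hz h => hacc z hz (h.mono (principal_mono.2 subset_union_left))) hmZ hZsymm hZsymm'
    (τ := 1 / 2) (by norm_num)
  obtain ⟨aP, GP, haP, hGP, hzP, hoP, hpP⟩ := exists_symm_product hg hg0 hgp hPstrip
    (fun z hz h => hacc z hz (h.mono (principal_mono.2 subset_union_right))) hmP hPsymm hPsymm'
    (τ := 1 / 2) (by norm_num)
  obtain ⟨ε, R, hε, hR, hRs⟩ := exists_signs (a := fun p => aZ p - aP p) fun p =>
    (abs_sub _ _).trans (by linarith [haZ p, haP p])
  have hε1 : ∀ n, ‖ε n‖ ≤ 1 := fun n => by rcases hε n with h | h <;> simp [h]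
  have hpow := powerSum_differentiableOn (χ := ε) fun p => hε1 p
  have hA : ∀ {F : ℂ → ℂ}, DifferentiableOn ℂ F HP → ∀ s ∈ HP, AnalyticAt ℂ F s := fun hF s hs =>
    hF.analyticAt (isOpen_HP.mem_nhds hs)
  have hE : ∀ s ∈ HP, AnalyticAt ℂ (fun s => exp (R s + powerSum ε s)) s :=
    hA (hR.add hpow).cexp
  have hcongr : ∀ s, GZ s / GP s * exp (R s + powerSum ε s) =
      GZ s * (exp (R s + powerSum ε s) * (GP s)⁻¹) := fun s => by ring
  have han : ∀ s ∈ HP, s ∉ SP → AnalyticAt ℂ (fun s => exp (R s + powerSum ε s) * (GP s)⁻¹) s :=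
    fun s hs hsP => (hE s hs).mul ((hA hGP s hs).inv fun h => hsP ((hzP s hs).1 h))
  have hne : ∀ s ∈ HP, s ∉ SP → exp (R s + powerSum ε s) * (GP s)⁻¹ ≠ 0 := fun s hs hsP =>
    mul_ne_zero (exp_ne_zero _) (inv_ne_zero fun h => hsP ((hzP s hs).1 h))
  refine ⟨fun n => multExt ε n, fun s => GZ s / GP s * exp (R s + powerSum ε s),
    ⟨map_one _, map_mul _⟩, fun n hn => ?_, fun s hs => ?_, fun s hs => ?_, ?_, fun s hs hsP => ?_,
    fun s hs => ?_, fun s hs => ?_⟩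
  · simpa using multExt_sign hε (Nat.one_le_iff_ne_zero.1 hn)
  · exact ((hA hGZ s hs).meromorphicAt.div (hA hGP s hs).meromorphicAt).mul
      (hE s hs).meromorphicAt
  · have hn : ∀ {a : Nat.Primes → ℝ}, (∀ p, |a p| ≤ 1 / 2) → ∀ p, ‖(a p : ℂ)‖ ≤ 1 / 2 :=
      fun h p => by rw [norm_real]; exact h p
    have hd : ∀ p : Nat.Primes, ‖ε p - ((aZ p - aP p : ℝ) : ℂ)‖ ≤ 2 := fun p => by
      refine (norm_sub_le _ _).trans ?_
      rw [norm_real]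
      have := (abs_sub (aZ p) (aP p)).trans (add_le_add (haZ p) (haP p))
      have h1 := hε1 p
      rw [Real.norm_eq_abs]
      linarith
    have hkey : primeSum (fun p => aZ p) s + R s =
        primeSum (fun p => ε p) s + primeSum (fun p => aP p) s := by
      rw [hRs s hs, ← primeSum_add (hn haZ) hd hs, ← primeSum_add (fun p => hε1 p) (hn haP) hs]
      congr 1
      funext p
      push_cast
      ring
    beta_reduce
    rw [helsonZeta_eq_exp (fun p => hε1 p) hs, hpZ s hs, hpP s hs, ← exp_sub, ← exp_add, ← exp_add]
    congr 1
    linear_combination hkey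
  · rintro s ⟨hs, hsP⟩
    simp only [hcongr]
    exact (hA hGZ s hs).mul (han s hs hsP)
  · beta_reduce
    rw [hcongr, mul_eq_zero, or_iff_left (hne s hs hsP)]
    exact hzZ s hs
  · simp only [hcongr]
    have hsP : s ∉ SP := disjoint_left.1 hdisj hs
    have hsH : s ∈ HP := (hZstrip s hs).1
    exact zeroOfOrder_mul (hoZ s hs) (han s hsH hsP) (hne s hsH hsP)
  · have hsZ : s ∉ SZ := disjoint_right.1 hdisj hs
    have hsH : s ∈ HP := (hPstrip s hs).1
    obtain ⟨f, hf, hf0, hfe⟩ := hoP s hs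
    refine ⟨fun z => GZ z * exp (R z + powerSum ε z) * (f z)⁻¹,
      ((hA hGZ s hsH).mul (hE s hsH)).mul (hf.inv hf0),
      mul_ne_zero (mul_ne_zero (fun h => hsZ ((hzZ s hsH).1 h)) (exp_ne_zero _))
        (inv_ne_zero hf0), ?_⟩
    filter_upwards [nhdsWithin_le_nhds hfe] with z hz
    rw [hz, zpow_neg, zpow_natCast, div_eq_mul_inv, mul_inv]
    ring
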